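/- arXiv:2210.08840 — 3 statements merged into one kernel-verified Lean document; each statement's English description precedes it below -/
import Mathlib

section
/- Every nonzero ideal of O_K = ℤ[i] that is coprime to 2 has a unique generator congruent to 1 modulo (1+i)³. -/
open Complex Real Filter Topology
open scoped BigOperators Classical

noncomputable section

/-- The norm `N(n)` of a Gaussian integer, as a real number. -/
def Nm (n : GaussianInt) : ℝ := ((Zsqrtd.norm n : ℤ) : ℝ)

/-- The element `1 + i` of `ℤ[i]`. -/
def ωg : GaussianInt := ⟨1, 1⟩

/-- The element `i` of `ℤ[i]`. -/
def ig : GaussianInt := ⟨0, 1⟩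

/-- `n` is primary: `n ≡ 1 mod (1+i)³`. -/
def IsPrimary (n : GaussianInt) : Prop := ωg ^ 3 ∣ (n - 1)

/-- `ẽ(z) = exp(2πi(z/(2i) − z̄/(2i)))`. -/
def eT (z : ℂ) : ℂ :=
  Complex.exp (2 * (Real.pi : ℂ) * Complex.I *
    (z / (2 * Complex.I) - (starRingEnd ℂ) z / (2 * Complex.I)))

/-- `χ a n = (a/n)` is the quadratic residue symbol of `ℤ[i]`: on odd primes `ϖ` it is
the `±1` (or `0`) value determined by `(a/ϖ) ≡ a^((N(ϖ)-1)/2) mod ϖ`, it is extended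
multiplicatively in the denominator over odd elements, and equals `1` on units. -/
structure IsQuadSym (χ : GaussianInt → GaussianInt → ℤ) : Prop where
  val_prime : ∀ ϖ a : GaussianInt, Prime ϖ → ¬ ωg ∣ ϖ → ¬ ϖ ∣ a →
    (χ a ϖ = 1 ∨ χ a ϖ = -1) ∧
      ϖ ∣ (a ^ (((Zsqrtd.norm ϖ).toNat - 1) / 2) - (χ a ϖ : GaussianInt))
  zero_of_dvd : ∀ ϖ a : GaussianInt, Prime ϖ → ϖ ∣ a → χ a ϖ = 0
  mul_den : ∀ a m n : GaussianInt, ¬ ωg ∣ m → ¬ ωg ∣ n → χ a (m * n) = χ a m * χ a n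
  unit_den : ∀ a u : GaussianInt, IsUnit u → χ a u = 1

/-- `L s m = L(s, χ_m)`: the Hecke `L`-function attached to the quadratic symbol `(m/·)`,
given by its Dirichlet series over primary elements (= odd ideals) for `Re s > 1`,
and analytic away from `s = 1`. -/
def IsHeckeL (χ : GaussianInt → GaussianInt → ℤ) (L : ℂ → GaussianInt → ℂ) : Prop :=
  (∀ (m : GaussianInt) (s : ℂ), 1 < s.re →
      L s m = ∑' n : {n : GaussianInt // IsPrimary n}, (χ m n.1 : ℂ) / (Nm n.1 : ℂ) ^ s) ∧
    ∀ m : GaussianInt, DifferentiableOn ℂ (fun s => L s m) {s : ℂ | s ≠ 1}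

/-- The generalized Riemann hypothesis for the family of quadratic Hecke `L`-functions. -/
def GRHfor (L : ℂ → GaussianInt → ℂ) : Prop :=
  ∀ m : GaussianInt, m ≠ 0 → ∀ s : ℂ, 0 < s.re → s.re < 1 → L s m = 0 → s.re = 1 / 2

/-- The absolute norm of an ideal of `ℤ[i]`, as a complex number. -/
def idN (I : Ideal GaussianInt) : ℂ := (Nat.card (GaussianInt ⧸ I) : ℂ)

/-- The Dedekind zeta function of `ℚ(i)`. -/
def IsDedekindZetaK (Z : ℂ → ℂ) : Prop :=
  (∀ s : ℂ, 1 < s.re → Z s = ∑' I : {I : Ideal GaussianInt // I ≠ ⊥}, idN I.1 ^ (-s)) ∧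
    DifferentiableOn ℂ Z {s : ℂ | s ≠ 1}

/-- `ζ_K^{(2)}`: the Euler product of `ζ_K` with the factor at the prime `(1+i)` omitted. -/
def zeta2 (Z : ℂ → ℂ) (s : ℂ) : ℂ := Z s * (1 - (2 : ℂ) ^ (-s))

/-- `P(z) = ∏_ϖ (1 + ((N(ϖ)^{z-1/2} − 1)(N(ϖ) + 1))⁻¹)`, over all primes of `ℤ[i]`. -/
def Pfun (z : ℂ) : ℂ :=
  ∏' I : {I : Ideal GaussianInt // I ≠ ⊥ ∧ I.IsPrime},
    (1 + 1 / ((idN I.1 ^ (z - 1 / 2) - 1) * (idN I.1 + 1)))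

/-- The Euler product over odd primes appearing in the ratios-conjecture main term. -/
def ratioEuler (α β : ℂ) : ℂ :=
  ∏' I : {I : Ideal GaussianInt // I ≠ ⊥ ∧ I.IsPrime ∧ (2 : GaussianInt) ∉ I},
    (1 + (idN I.1 ^ (α - β) - 1) / (idN I.1 ^ (1 + α - β) * (idN I.1 ^ (1 + α + β) - 1)))

/-- `g r n` is the quadratic Gauss sum `g(r,n) = ∑_{x mod n} (x/n) ẽ(rx/n)`:
for any complete residue system `S` modulo `n` it is given by the indicated finite sum. -/
def IsGaussSum (χ : GaussianInt → GaussianInt → ℤ) (g : GaussianInt → GaussianInt → ℂ) : Prop :=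
  ∀ r n : GaussianInt, n ≠ 0 → ∀ S : Finset GaussianInt,
    (∀ z : GaussianInt, ∃! x, x ∈ S ∧ n ∣ (z - x)) →
    g r n = ∑ x ∈ S, (χ x n : ℂ) * eT (GaussianInt.toComplex (r * x) / GaussianInt.toComplex n)

/-- A Dirichlet character modulo `q` on `ℤ[i]` (extended by zero). -/
def IsDirichletChar (q : GaussianInt) (χ : GaussianInt → ℂ) : Prop :=
  χ 1 = 1 ∧ (∀ a b : GaussianInt, χ (a * b) = χ a * χ b) ∧
    (∀ a b : GaussianInt, q ∣ (a - b) → χ a = χ b) ∧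
    (∀ a : GaussianInt, IsCoprime a q → ‖χ a‖ = 1) ∧
    (∀ a : GaussianInt, ¬ IsCoprime a q → χ a = 0)

/-- The Gauss sum `g(r,χ) = ∑_{x mod q} χ(x) ẽ(rx/q)` of a Dirichlet character modulo `q`. -/
def IsGaussSumChar (q : GaussianInt) (χ : GaussianInt → ℂ) (g : GaussianInt → ℂ) : Prop :=
  ∀ r : GaussianInt, ∀ S : Finset GaussianInt,
    (∀ z : GaussianInt, ∃! x, x ∈ S ∧ q ∣ (z - x)) →
    g r = ∑ x ∈ S, χ x * eT (GaussianInt.toComplex (r * x) / GaussianInt.toComplex q)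

/-- A primary `n = a + bi` is of type 1 if `a ≡ 1, b ≡ 0 (mod 4)` (else it is of type 2). -/
def IsTypeOne (n : GaussianInt) : Prop := n.re % 4 = 1 ∧ n.im % 4 = 0

/-- `ψ₁`, the principal character modulo `2` on `ℤ[i]`. -/
def psi1 (m : GaussianInt) : ℂ := if IsCoprime m 2 then 1 else 0

/-- `ψ₂`, the primitive quadratic character modulo `2` on `ℤ[i]`:
`ψ₂(m) = 1` for `m ≡ 1 (mod 2)`, `ψ₂(m) = −1` for `m ≡ i (mod 2)`, and `0` otherwise. -/
def psi2 (m : GaussianInt) : ℂ :=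
  if (2 : GaussianInt) ∣ (m - 1) then 1 else if (2 : GaussianInt) ∣ (m - ig) then -1 else 0

/-- `χ̃_n = ψ_j · (·/n)`, where `j` is the type of the primary element `n`. -/
def tchi (χ : GaussianInt → GaussianInt → ℤ) (n m : GaussianInt) : ℂ :=
  (if IsTypeOne n then psi1 m else psi2 m) * (χ m n : ℂ)

/-!
Reduction modulo `(1 + i)³` maps the units `{±1, ±i}` of `ℤ[i]` bijectively onto the units of
`ℤ[i] / ((1 + i)³)`. The generators of an ideal coprime to `2` form a single orbit of the units of
`ℤ[i]`, and their residues are invertible, so exactly one of them has residue `1`.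
-/

section GeneratorsModuloIdeal

variable {R : Type*} [CommRing R] {J : Ideal R}

theorem isUnit_quotient_mk_iff_isCoprime_span {g : R} :
    IsUnit (Ideal.Quotient.mk J g) ↔ IsCoprime (Ideal.span {g}) J := by
  rw [Ideal.isCoprime_iff_exists, isUnit_iff_exists_inv]
  constructor
  · rintro ⟨b, hb⟩
    obtain ⟨b, rfl⟩ := Ideal.Quotient.mk_surjective b
    have hmem : 1 - g * b ∈ J := Ideal.Quotient.eq.mp (by rw [map_one, map_mul, hb])
    exact ⟨g * b, Ideal.mem_span_singleton.mpr (dvd_mul_right g b), 1 - g * b, hmem,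
      add_sub_cancel _ _⟩
  · rintro ⟨x, hx, j, hj, hxj⟩
    obtain ⟨b, rfl⟩ := Ideal.mem_span_singleton.mp hx
    refine ⟨Ideal.Quotient.mk J b, ?_⟩
    rw [← map_mul, eq_sub_of_add_eq hxj, map_sub, map_one, Ideal.Quotient.eq_zero_iff_mem.mpr hj,
      sub_zero]

theorem sub_one_mem_iff_quotient_mk_eq_one {n : R} :
    n - 1 ∈ J ↔ Ideal.Quotient.mk J n = 1 := by
  rw [← Ideal.Quotient.eq, map_one]

theorem exists_generator_sub_one_mem
    (hJ : Function.Surjective (Units.map (Ideal.Quotient.mk J : R →* R ⧸ J)))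
    {I : Ideal R} [hI : I.IsPrincipal] (hIJ : IsCoprime I J) :
    ∃ n : R, n - 1 ∈ J ∧ I = Ideal.span {n} := by
  obtain ⟨g, rfl⟩ : ∃ g, I = Ideal.span {g} := hI.principal
  have hg : IsUnit (Ideal.Quotient.mk J g) := isUnit_quotient_mk_iff_isCoprime_span.mpr hIJ
  obtain ⟨u, hu⟩ := hJ hg.unit⁻¹
  have hu_val : Ideal.Quotient.mk J u = ↑hg.unit⁻¹ := congrArg Units.val hu
  refine ⟨g * u, sub_one_mem_iff_quotient_mk_eq_one.mpr ?_,
    (Ideal.span_singleton_mul_right_unit u.isUnit g).symm⟩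
  rw [map_mul, hu_val, hg.mul_val_inv]

theorem eq_of_span_eq_of_sub_one_mem [IsDomain R]
    (hJ : Function.Injective (Units.map (Ideal.Quotient.mk J : R →* R ⧸ J)))
    {m n : R} (hm : m - 1 ∈ J) (hn : n - 1 ∈ J) (hmn : Ideal.span {m} = Ideal.span {n}) :
    m = n := by
  obtain ⟨u, rfl⟩ := Ideal.span_singleton_eq_span_singleton.mp hmn
  rw [sub_one_mem_iff_quotient_mk_eq_one] at hm hn
  rw [map_mul, hm, one_mul] at hn
  have hu : u = 1 := (injective_iff_map_eq_one _).mp hJ u (Units.ext hn)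
  rw [hu, Units.val_one, mul_one]

theorem existsUnique_generator_sub_one_mem [IsDomain R]
    (hJ : Function.Bijective (Units.map (Ideal.Quotient.mk J : R →* R ⧸ J)))
    {I : Ideal R} [I.IsPrincipal] (hIJ : IsCoprime I J) :
    ∃! n : R, n - 1 ∈ J ∧ I = Ideal.span {n} :=
  existsUnique_of_exists_of_unique (exists_generator_sub_one_mem hJ.surjective hIJ)
    fun _ _ hm hn ↦ eq_of_span_eq_of_sub_one_mem hJ.injective hm.1 hn.1 (hm.2.symm.trans hn.2)

end GeneratorsModuloIdeal

theorem ωg_dvd_iff {n : GaussianInt} : ωg ∣ n ↔ 2 ∣ n.re + n.im := by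
  constructor
  · rintro ⟨c, rfl⟩
    simp only [ωg, Zsqrtd.re_mul, Zsqrtd.im_mul]
    omega
  · intro h
    refine ⟨⟨(n.re + n.im) / 2, (n.im - n.re) / 2⟩, ?_⟩
    ext <;> simp only [ωg, Zsqrtd.re_mul, Zsqrtd.im_mul] <;> omega

theorem ωg_pow_three : ωg ^ 3 = ⟨-2, 2⟩ := by
  decide

theorem ωg_pow_three_dvd_iff {n : GaussianInt} :
    ωg ^ 3 ∣ n ↔ 2 ∣ n.im ∧ 4 ∣ n.re + n.im := by
  rw [ωg_pow_three]
  constructor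
  · rintro ⟨c, rfl⟩
    simp only [Zsqrtd.re_mul, Zsqrtd.im_mul]
    omega
  · rintro ⟨him, hsum⟩
    refine ⟨⟨(n.im - n.re) / 4, -(n.re + n.im) / 4⟩, ?_⟩
    ext <;> simp only [Zsqrtd.re_mul, Zsqrtd.im_mul] <;> omega

theorem not_isUnit_ωg : ¬ IsUnit ωg := by
  rw [← Zsqrtd.norm_eq_one_iff' (by decide)]
  decide

theorem ωg_pow_three_dvd_two_sq : ωg ^ 3 ∣ 2 ^ 2 :=
  ωg_pow_three_dvd_iff.mpr (by decide)

theorem isCoprime_span_ωg_pow_three {I : Ideal GaussianInt}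
    (hI : IsCoprime I (Ideal.span {2})) : IsCoprime I (Ideal.span {ωg ^ 3}) := by
  have hI4 : IsCoprime I (Ideal.span {2 ^ 2}) := by
    simpa only [Ideal.span_singleton_pow] using hI.pow_right (n := 2)
  rw [Ideal.isCoprime_iff_codisjoint] at hI4 ⊢
  exact hI4.mono_right (Ideal.span_singleton_le_span_singleton.mpr ωg_pow_three_dvd_two_sq)

theorem exists_unit_ωg_pow_three_dvd_sub {n : GaussianInt} (hn : ¬ ωg ∣ n) :
    ∃ u : GaussianIntˣ, ωg ^ 3 ∣ n - u := by
  suffices ∃ u : GaussianInt, u.norm = 1 ∧ ωg ^ 3 ∣ n - u by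
    obtain ⟨u, hu, hdvd⟩ := this
    exact ⟨((Zsqrtd.norm_eq_one_iff' (by decide) u).mp hu).unit, hdvd⟩
  rw [ωg_dvd_iff] at hn
  simp only [ωg_pow_three_dvd_iff, Zsqrtd.re_sub, Zsqrtd.im_sub]
  rcases Int.emod_two_eq_zero_or_one n.im with him | him
  · obtain h | h : (n.re + n.im) % 4 = 1 ∨ (n.re + n.im) % 4 = 3 := by omega
    · exact ⟨⟨1, 0⟩, by decide, by dsimp only; omega⟩
    · exact ⟨⟨-1, 0⟩, by decide, by dsimp only; omega⟩
  · obtain h | h : (n.re + n.im) % 4 = 1 ∨ (n.re + n.im) % 4 = 3 := by omega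
    · exact ⟨⟨0, 1⟩, by decide, by dsimp only; omega⟩
    · exact ⟨⟨0, -1⟩, by decide, by dsimp only; omega⟩

theorem eq_one_of_ωg_pow_three_dvd_sub_one {u : GaussianIntˣ}
    (h : ωg ^ 3 ∣ (u : GaussianInt) - 1) : u = 1 := by
  obtain ⟨him, hsum⟩ := ωg_pow_three_dvd_iff.mp h
  have hnorm := (Zsqrtd.norm_eq_one_iff' (by decide) (u : GaussianInt)).mpr u.isUnit
  rw [Zsqrtd.norm_def] at hnorm
  simp only [Zsqrtd.re_sub, Zsqrtd.im_sub, Zsqrtd.re_one, Zsqrtd.im_one] at him hsum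
  have him_zero : (u : GaussianInt).im = 0 := by
    have : -2 < (u : GaussianInt).im := by nlinarith [mul_self_nonneg (u : GaussianInt).re]
    have : (u : GaussianInt).im < 2 := by nlinarith [mul_self_nonneg (u : GaussianInt).re]
    omega
  have hre : (u : GaussianInt).re = 1 ∨ (u : GaussianInt).re = -1 :=
    mul_self_eq_one_iff.mp (by simpa only [him_zero, mul_zero, sub_zero] using hnorm)
  refine Units.ext (Zsqrtd.ext ?_ ?_) <;>
    simp only [Units.val_one, Zsqrtd.re_one, Zsqrtd.im_one] <;> omega

theorem bijective_units_map_quotient_ωg_pow_three :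
    Function.Bijective (Units.map
      (Ideal.Quotient.mk (Ideal.span {ωg ^ 3}) :
        GaussianInt →* GaussianInt ⧸ Ideal.span {ωg ^ 3})) := by
  constructor
  · refine (injective_iff_map_eq_one _).mpr fun u hu ↦ eq_one_of_ωg_pow_three_dvd_sub_one ?_
    exact Ideal.mem_span_singleton.mp (Ideal.Quotient.eq.mp (congrArg Units.val hu))
  · intro w
    obtain ⟨n, hn⟩ := Ideal.Quotient.mk_surjective (w : GaussianInt ⧸ Ideal.span {ωg ^ 3})
    have hcop : IsCoprime n (ωg ^ 3) := by
      rw [← Ideal.isCoprime_span_singleton_iff, ← isUnit_quotient_mk_iff_isCoprime_span, hn]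
      exact w.isUnit
    have hndvd : ¬ ωg ∣ n := fun hdvd ↦
      not_isUnit_ωg (hcop.isUnit_of_dvd' hdvd (dvd_pow_self ωg three_ne_zero))
    obtain ⟨u, hu⟩ := exists_unit_ωg_pow_three_dvd_sub hndvd
    refine ⟨u, Units.ext ?_⟩
    exact (Ideal.Quotient.eq.mpr (Ideal.mem_span_singleton.mpr hu)).symm.trans hn

/-- every nonzero ideal of `ℤ[i]` coprime to `2` has a unique generator
congruent to `1` modulo `(1+i)³` (the primary generator). -/
theorem exists_unique_primary_generator :
    ∀ I : Ideal GaussianInt, I ≠ ⊥ → IsCoprime I (Ideal.span {(2 : GaussianInt)}) →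
      ∃! n : GaussianInt, IsPrimary n ∧ I = Ideal.span {n} := by
  intro I _ hI
  simpa only [IsPrimary, Ideal.mem_span_singleton] using
    existsUnique_generator_sub_one_mem bijective_units_map_quotient_ωg_pow_three
      (isCoprime_span_ωg_pow_three hI)
end
end

section
/- Let n, m be primary elements of O_K and let r, s, k ∈ O_K. Then: (i) if (s,n) = 1, then g(rs, n) = conj((s/n)) · g(r, n); (ii) if (m, n) = 1, then g(k, mn) = g(k, m) · g(k, n). -/
open Complex Real Filter Topology
open scoped BigOperators Classical

noncomputable section

/-!
Splitting a residue modulo `mn` as `nx + my`, with `x` modulo `m` and `y` modulo `n`, gives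
`g(k, mn) = (n/m)(m/n) g(k, m) g(k, n)` for coprime odd `m` and `n`, so (ii) amounts to
quadratic reciprocity `(m/n) = (n/m)` in `ℤ[i]` for `m ≡ n ≡ 1 (mod 2)`.

Reciprocity is reduced to that of the Jacobi symbol by evaluating `(·/·)` on rational integers:
`(c/n) = J(c | N n)` by Euler's criterion and `(z/c) = J(N z | c)` by the congruence
`z ^ q ≡ z̄ (mod q)` at inert primes `q`. This settles the case where one entry is a rational
integer. If `m = a + bi` with `a`, `b` coprime and `n = c + di`, then
`a n ≡ ac + bd (mod m)` and `(a/m) = 1` give `(n/m) = J(ac + bd | N m)`. When both entries are of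
this kind, `(n/m)(m/n) = J(ac + bd | N m N n) = 1`, because `N m N n = (ac + bd)² + (ad - bc)²`.
-/

section ResidueSystems

variable {R : Type*} [CommRing R]

/-- `S` is a complete residue system modulo `n`: each element of `R` is congruent modulo `n` to
exactly one element of `S`. This is the condition on the index set `S` in `IsGaussSum`. -/
def IsCompleteResidueSystem (n : R) (S : Finset R) : Prop :=
  ∀ z : R, ∃! x, x ∈ S ∧ n ∣ z - x

namespace IsCompleteResidueSystem

variable {m n s : R} {S T : Finset R}

theorem exists_dvd_sub (hS : IsCompleteResidueSystem n S) (z : R) : ∃ x ∈ S, n ∣ z - x :=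
  (hS z).exists

theorem eq_of_dvd_sub (hS : IsCompleteResidueSystem n S) {x y : R} (hx : x ∈ S) (hy : y ∈ S)
    (h : n ∣ x - y) : x = y :=
  (hS x).unique ⟨hx, by simp⟩ ⟨hy, h⟩

theorem of_exists_of_eq (hex : ∀ z, ∃ x ∈ S, n ∣ z - x)
    (heq : ∀ x ∈ S, ∀ y ∈ S, n ∣ x - y → x = y) : IsCompleteResidueSystem n S := by
  intro z
  obtain ⟨x, hx, hzx⟩ := hex z
  refine ⟨x, ⟨hx, hzx⟩, fun y ⟨hy, hzy⟩ => heq y hy x hx ?_⟩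
  simpa using dvd_sub hzx hzy

theorem injOn_mul_left (hS : IsCompleteResidueSystem n S) (hsn : IsCoprime s n) :
    Set.InjOn (s * ·) (S : Set R) := fun x hx y hy hxy =>
  hS.eq_of_dvd_sub hx hy <| hsn.symm.dvd_of_dvd_mul_left <| by
    simp only at hxy
    rw [mul_sub, hxy, sub_self]
    exact dvd_zero n

theorem image_mul_left [DecidableEq R] (hS : IsCompleteResidueSystem n S) (hsn : IsCoprime s n) :
    IsCompleteResidueSystem n (S.image (s * ·)) := by
  refine of_exists_of_eq (fun z => ?_) ?_
  · obtain ⟨u, v, huv⟩ := id hsn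
    obtain ⟨x, hx, d, hd⟩ := hS.exists_dvd_sub (u * z)
    exact ⟨s * x, Finset.mem_image_of_mem _ hx, s * d + v * z,
      by linear_combination s * hd - z * huv⟩
  · simp only [Finset.forall_mem_image, ← mul_sub]
    intro x hx y hy h
    rw [hS.eq_of_dvd_sub hx hy (hsn.symm.dvd_of_dvd_mul_left h)]

theorem eq_of_dvd_crt_sub (hS : IsCompleteResidueSystem m S) (hT : IsCompleteResidueSystem n T)
    (hmn : IsCoprime m n) {a b : R × R} (ha : a ∈ S ×ˢ T) (hb : b ∈ S ×ˢ T)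
    (h : m * n ∣ (n * a.1 + m * a.2) - (n * b.1 + m * b.2)) : a = b := by
  rw [Finset.mem_product] at ha hb
  obtain ⟨e, he⟩ := h
  refine Prod.ext (hS.eq_of_dvd_sub ha.1 hb.1 ?_) (hT.eq_of_dvd_sub ha.2 hb.2 ?_)
  · exact hmn.dvd_of_dvd_mul_left ⟨n * e - (a.2 - b.2), by linear_combination he⟩
  · exact hmn.symm.dvd_of_dvd_mul_left ⟨m * e - (a.1 - b.1), by linear_combination he⟩

theorem injOn_crt (hS : IsCompleteResidueSystem m S) (hT : IsCompleteResidueSystem n T)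
    (hmn : IsCoprime m n) :
    Set.InjOn (fun t : R × R => n * t.1 + m * t.2) (S ×ˢ T : Finset (R × R)) :=
  fun a ha b hb hab => hS.eq_of_dvd_crt_sub hT hmn ha hb (by simp only at hab; simp [hab])

theorem image_crt [DecidableEq R] (hS : IsCompleteResidueSystem m S)
    (hT : IsCompleteResidueSystem n T) (hmn : IsCoprime m n) :
    IsCompleteResidueSystem (m * n) ((S ×ˢ T).image fun t => n * t.1 + m * t.2) := by
  refine of_exists_of_eq (fun z => ?_) ?_
  · obtain ⟨u, v, huv⟩ := id hmn
    obtain ⟨x, hx, d, hd⟩ := hS.exists_dvd_sub (v * z)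
    obtain ⟨y, hy, e, he⟩ := hT.exists_dvd_sub (u * z)
    exact ⟨n * x + m * y, Finset.mem_image.2 ⟨(x, y), Finset.mk_mem_product hx hy, rfl⟩, d + e,
      by linear_combination n * hd + m * he - z * huv⟩
  · simp only [Finset.forall_mem_image]
    intro a ha b hb h
    rw [hS.eq_of_dvd_crt_sub hT hmn ha hb h]

end IsCompleteResidueSystem

theorem exists_isCompleteResidueSystem (n : R) [Finite (R ⧸ Ideal.span {n})] :
    ∃ S : Finset R, IsCompleteResidueSystem n S := by
  let rep : R ⧸ Ideal.span {n} → R := Quotient.out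
  have mk_rep (q) : Ideal.Quotient.mk (Ideal.span {n}) (rep q) = q := Quotient.out_eq q
  refine ⟨(Set.finite_range rep).toFinset, .of_exists_of_eq (fun z => ?_) ?_⟩
  · refine ⟨rep (Ideal.Quotient.mk _ z), by simp, ?_⟩
    rw [← Ideal.mem_span_singleton, ← Ideal.Quotient.eq, mk_rep]
  · simp only [Set.Finite.mem_toFinset, Set.forall_mem_range]
    intro a b h
    rw [← Ideal.mem_span_singleton, ← Ideal.Quotient.eq, mk_rep, mk_rep] at h
    rw [h]

end ResidueSystems

instance moduleFinite_zsqrtd (d : ℤ) : Module.Finite ℤ (ℤ√d) :=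
  Module.Finite.of_surjective
    (.coprod (.toSpanSingleton ℤ (ℤ√d) 1) (.toSpanSingleton ℤ (ℤ√d) Zsqrtd.sqrtd) : ℤ × ℤ →ₗ[ℤ] ℤ√d)
    fun z => ⟨(z.re, z.im), by ext <;> simp⟩

theorem exists_isCompleteResidueSystem_gaussianInt {n : GaussianInt} (hn : n ≠ 0) :
    ∃ S : Finset GaussianInt, IsCompleteResidueSystem n S := by
  have : Finite (GaussianInt ⧸ Ideal.span {n}) :=
    Ideal.finiteQuotientOfFreeOfNeBot _ (by simpa using hn)
  exact exists_isCompleteResidueSystem n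

section RationalIntegers

open scoped NumberTheorySymbols

theorem eq_of_dvd_sub_of_trichotomy {R : Type*} [CommRing R] {p : R} (hp : ¬ p ∣ 2)
    {x y : ℤ} (hx : x = 0 ∨ x = 1 ∨ x = -1) (hy : y = 0 ∨ y = 1 ∨ y = -1)
    (h : p ∣ (x : R) - (y : R)) : x = y := by
  by_contra hxy
  have hdvd : x - y ∣ 2 := by
    rcases hx with rfl | rfl | rfl <;> rcases hy with rfl | rfl | rfl <;> revert hxy <;> decide
  exact hp (h.trans (by exact_mod_cast Int.cast_dvd_cast (α := R) _ _ hdvd))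

theorem zmod_intCast_pow_eq_jacobiSym (q : ℕ) [Fact q.Prime] (hq : Odd q) (c : ℤ) (k : ℕ) :
    (c : ZMod q) ^ ((q ^ k - 1) / 2) = (J(c | q ^ k) : ZMod q) := by
  induction k with
  | zero => simp
  | succ k ih =>
    have hexp : (q ^ (k + 1) - 1) / 2 = (q ^ k - 1) / 2 * q + q / 2 := by
      obtain ⟨a, ha⟩ := hq
      obtain ⟨b, hb⟩ : Odd (q ^ k) := Odd.pow ⟨a, ha⟩
      have hmul : q ^ (k + 1) = 2 * (b * q + a) + 1 := by
        rw [pow_succ, hb]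
        linear_combination ha
      have hhalf : 2 * (b * q + a) / 2 = b * q + a := Nat.mul_div_cancel_left _ two_pos
      have hb_half : 2 * b / 2 = b := Nat.mul_div_cancel_left b two_pos
      have hq_half : q / 2 = a := by omega
      rw [hmul, hb, Nat.add_sub_cancel, Nat.add_sub_cancel, hhalf, hb_half, hq_half]
    rw [hexp, pow_add, pow_mul, ih, ZMod.pow_card, ← legendreSym.eq_pow,
      jacobiSym.legendreSym.to_jacobiSym, pow_succ, jacobiSym.pow_right,
      jacobiSym.mul_right, jacobiSym.pow_right]
    push_cast
    rfl

theorem prime_dvd_pow_sub_jacobiSym {R : Type*} [CommRing R] {q : ℕ} (hq : q.Prime) (hodd : Odd q)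
    (c : ℤ) (k : ℕ) : (q : R) ∣ (c : R) ^ ((q ^ k - 1) / 2) - (J(c | q ^ k) : R) := by
  have : Fact q.Prime := ⟨hq⟩
  have hdvd : (q : ℤ) ∣ c ^ ((q ^ k - 1) / 2) - J(c | q ^ k) := by
    rw [← ZMod.intCast_zmod_eq_zero_iff_dvd]
    push_cast
    rw [zmod_intCast_pow_eq_jacobiSym q hodd, sub_self]
  exact_mod_cast Int.cast_dvd_cast (α := R) _ _ hdvd

theorem jacobiSym_comm_of_one_mod_four {a : ℤ} (ha : Odd a) {N : ℕ} (hN : N % 4 = 1) :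
    J(a | N) = J(N | a.natAbs) := by
  have hsign : J(a | N) = J(a.natAbs | N) := by
    rcases Int.natAbs_eq a with h | h
    · rw [← h]
    · conv_lhs => rw [h, jacobiSym.neg _ (Nat.odd_iff.2 (by omega)), ZMod.χ₄_nat_one_mod_four hN,
        one_mul]
  rw [hsign, jacobiSym.quadratic_reciprocity_one_mod_four' (Int.natAbs_odd.2 ha) hN]

theorem isCoprime_of_jacobiSym_ne_zero {a b : ℤ} {N : ℕ} (hN : N ≠ 0)
    (hab : (N : ℤ) = a ^ 2 + b ^ 2) (h : J(a | N) ≠ 0) : IsCoprime a b := by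
  have haN : IsCoprime a (b ^ 2 + a * a) := by
    rw [← sq, add_comm, ← hab, Int.isCoprime_iff_gcd_eq_one]
    by_contra hgcd
    exact h (jacobiSym.eq_zero_iff.2 ⟨hN, hgcd⟩)
  exact (IsCoprime.pow_right_iff two_pos).1 (IsCoprime.add_mul_left_right_iff.1 haN)

theorem jacobiSym_eq_one_of_eq_sq_add_sq {a b : ℤ} {N : ℕ} (ha : Odd a) (hN : N % 4 = 1)
    (hab : IsCoprime a b) (h : (N : ℤ) = a ^ 2 + b ^ 2) : J(a | N) = 1 := by
  have hmod : (N : ℤ) % a.natAbs = b ^ 2 % a.natAbs :=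
    (Int.modEq_iff_dvd.2 (Int.natAbs_dvd.2 ⟨a, by rw [h]; ring⟩) : b ^ 2 ≡ N [ZMOD a.natAbs]).symm
  rw [jacobiSym_comm_of_one_mod_four ha hN, jacobiSym.mod_left' hmod]
  apply jacobiSym.sq_one'
  rw [Int.gcd, Int.natAbs_natCast]
  exact Int.isCoprime_iff_gcd_eq_one.1 hab.symm

end RationalIntegers

section QuadraticRings

open scoped NumberTheorySymbols

variable {d : ℤ}

theorem dvd_intCast_norm (z : ℤ√d) : z ∣ (z.norm : ℤ√d) :=
  ⟨star z, Zsqrtd.norm_eq_mul_conj z⟩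

theorem prime_dvd_pow_sub_star {q : ℕ} (hq : q.Prime) (hodd : Odd q) (hd : J(d | q) = -1)
    (z : ℤ√d) : (q : ℤ√d) ∣ z ^ q - star z := by
  have : Fact q.Prime := ⟨hq⟩
  have fermat (c : ℤ) : (q : ℤ√d) ∣ (c : ℤ√d) ^ q - c := by
    have h : (q : ℤ) ∣ c ^ q - c := by
      rw [← ZMod.intCast_zmod_eq_zero_iff_dvd]
      simp
    exact_mod_cast Int.cast_dvd_cast (α := ℤ√d) _ _ h
  have euler : (q : ℤ√d) ∣ Zsqrtd.sqrtd ^ q + Zsqrtd.sqrtd := by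
    obtain ⟨k, hk⟩ := hodd
    have h := prime_dvd_pow_sub_jacobiSym (R := ℤ√d) hq ⟨k, hk⟩ d 1
    rw [pow_one, hd, hk, Nat.add_sub_cancel, Nat.mul_div_cancel_left k two_pos,
      ← Zsqrtd.dmuld, ← sq, ← pow_mul, ← hk] at h
    convert h.mul_right Zsqrtd.sqrtd using 1
    rw [hk, pow_succ]
    push_cast
    ring
  have hz : z = (z.re : ℤ√d) + (Zsqrtd.sqrtd : ℤ√d) * z.im := Zsqrtd.decompose
  have hstar : star z = (z.re : ℤ√d) - (Zsqrtd.sqrtd : ℤ√d) * z.im := by ext <;> simp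
  obtain ⟨r, hr⟩ := exists_add_pow_prime_eq hq (z.re : ℤ√d) ((Zsqrtd.sqrtd : ℤ√d) * z.im)
  rw [← hz, mul_pow] at hr
  obtain ⟨u, hu⟩ := fermat z.re
  obtain ⟨v, hv⟩ := fermat z.im
  obtain ⟨w, hw⟩ := euler
  refine ⟨u + (z.im : ℤ√d) ^ q * w - Zsqrtd.sqrtd * v +
    (z.re : ℤ√d) * ((Zsqrtd.sqrtd : ℤ√d) * (z.im : ℤ√d)) * r, ?_⟩
  rw [hr, hstar]
  linear_combination hu + (z.im : ℤ√d) ^ q * hw - Zsqrtd.sqrtd * hv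

theorem prime_dvd_pow_succ_sub_norm {q : ℕ} (hq : q.Prime) (hodd : Odd q) (hd : J(d | q) = -1)
    (z : ℤ√d) : (q : ℤ√d) ∣ z ^ (q + 1) - (z.norm : ℤ√d) := by
  rw [Zsqrtd.norm_eq_mul_conj, pow_succ', ← mul_sub]
  exact (prime_dvd_pow_sub_star hq hodd hd z).mul_left z

end QuadraticRings

section OddGaussianIntegers

variable {n p z : GaussianInt}

theorem ωg_dvd_iff_s4 : ωg ∣ z ↔ Even (z.re + z.im) := by
  constructor
  · rintro ⟨w, rfl⟩
    exact ⟨w.re, by simp [ωg]⟩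
  · rintro ⟨k, hk⟩
    exact ⟨⟨k, k - z.re⟩, Zsqrtd.ext (by simp [ωg]) (by simp only [ωg, Zsqrtd.im_mul]; linarith)⟩

theorem ωg_dvd_star_iff : ωg ∣ star z ↔ ωg ∣ z := by
  simp only [ωg_dvd_iff_s4, Zsqrtd.re_star, Zsqrtd.im_star, Int.even_add, even_neg]

theorem norm_natAbs_mod_four_eq_one (hn : ¬ ωg ∣ n) : n.norm.natAbs % 4 = 1 := by
  suffices n.norm % 4 = 1 by
    have := GaussianInt.abs_natCast_norm n
    omega
  have hnorm : n.norm = n.re ^ 2 + n.im ^ 2 := by rw [Zsqrtd.norm_def]; ring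
  rw [ωg_dvd_iff_s4, Int.not_even_iff_odd, Int.odd_add] at hn
  rcases Int.even_or_odd n.im with him | him
  · have := Int.sq_mod_four_eq_one_of_odd (hn.2 him)
    obtain ⟨k, hk⟩ := him.two_dvd
    rw [hnorm, hk, mul_pow]
    omega
  · have hre : Even n.re := by rwa [← Int.not_odd_iff_even, hn, Int.not_even_iff_odd]
    have := Int.sq_mod_four_eq_one_of_odd him
    obtain ⟨k, hk⟩ := hre.two_dvd
    rw [hnorm, hk, mul_pow]
    omega

theorem two_dvd_sub_one_iff : 2 ∣ z - 1 ↔ Odd z.re ∧ Even z.im := by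
  have h := Zsqrtd.intCast_dvd 2 (z - 1)
  simp only [Int.cast_ofNat, Zsqrtd.re_sub, Zsqrtd.im_sub, Zsqrtd.re_one, Zsqrtd.im_one] at h
  rw [h, Int.odd_iff, Int.even_iff]
  omega

theorem not_ωg_dvd_of_two_dvd_sub_one (h : 2 ∣ n - 1) : ¬ ωg ∣ n := by
  obtain ⟨hre, him⟩ := two_dvd_sub_one_iff.1 h
  rw [ωg_dvd_iff_s4, Int.not_even_iff_odd]
  exact hre.add_even him

theorem IsPrimary.two_dvd_sub_one (hn : IsPrimary n) : 2 ∣ n - 1 :=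
  Dvd.dvd.trans ⟨⟨-1, 1⟩, by decide⟩ hn

theorem ne_zero_of_not_ωg_dvd (hn : ¬ ωg ∣ n) : n ≠ 0 := by
  rintro rfl
  exact hn (dvd_zero ωg)

theorem not_dvd_two_of_prime (hp : Prime p) (hodd : ¬ ωg ∣ p) : ¬ p ∣ 2 := by
  rintro ⟨w, hw⟩
  have h4 : p.norm.natAbs ∣ 4 := ⟨w.norm.natAbs, by
    rw [← Int.natAbs_mul, ← Zsqrtd.norm_mul, ← hw]; rfl⟩
  have hle := Nat.le_of_dvd (by norm_num) h4
  have hmod := norm_natAbs_mod_four_eq_one hodd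
  exact hp.not_isUnit (Zsqrtd.norm_eq_one_iff.1 (by omega))

theorem exists_prime_natCast_dvd_norm_eq_pow (hp : Prime p) :
    ∃ q k : ℕ, q.Prime ∧ p ∣ (q : GaussianInt) ∧ p.norm.natAbs = q ^ k := by
  have hprod : p ∣ (p.norm.natAbs.primeFactorsList.map (Nat.cast : ℕ → GaussianInt)).prod := by
    rw [← Nat.cast_list_prod, Nat.prod_primeFactorsList
      (Int.natAbs_ne_zero.2 (GaussianInt.norm_eq_zero.not.2 hp.ne_zero)),
      GaussianInt.natCast_natAbs_norm]
    exact dvd_intCast_norm p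
  obtain ⟨_, hmem, hpq⟩ := hp.dvd_prod_iff.1 hprod
  obtain ⟨q, hq, rfl⟩ := List.mem_map.1 hmem
  have hqp := Nat.prime_of_mem_primeFactorsList hq
  obtain ⟨w, hw⟩ := id hpq
  have hdvd : p.norm.natAbs ∣ q ^ 2 := ⟨w.norm.natAbs, by
    rw [← Int.natAbs_mul, ← Zsqrtd.norm_mul, ← hw, Zsqrtd.norm_natCast, sq]; rfl⟩
  obtain ⟨k, -, hk⟩ := (Nat.dvd_prime_pow hqp).1 hdvd
  exact ⟨q, k, hqp, hpq, hk⟩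

@[elab_as_elim]
theorem odd_induction {motive : (n : GaussianInt) → ¬ ωg ∣ n → Prop}
    (unit : ∀ u (hodd : ¬ ωg ∣ u), IsUnit u → motive u hodd)
    (prime_mul : ∀ p a (_ : Prime p) (_ : ¬ ωg ∣ p) (hao : ¬ ωg ∣ a) (hodd : ¬ ωg ∣ p * a),
      motive a hao → motive (p * a) hodd)
    (n : GaussianInt) (hn : ¬ ωg ∣ n) : motive n hn := by
  induction n using UniqueFactorizationMonoid.induction_on_prime with
  | h₁ => exact absurd (dvd_zero ωg) hn
  | h₂ u hu => exact unit u hn hu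
  | h₃ a p _ hp ih =>
    have ha : ¬ ωg ∣ a := fun h => hn (h.mul_left p)
    exact prime_mul p a hp (fun h => hn (h.mul_right a)) ha hn (ih ha)

theorem not_ωg_dvd_natCast {c : ℕ} (hc : Odd c) : ¬ ωg ∣ (c : GaussianInt) := by
  rw [ωg_dvd_iff_s4, Int.not_even_iff_odd]
  simpa using hc

theorem exists_natCast_mul_primitive (hn : 2 ∣ n - 1) :
    ∃ (c : ℕ) (n₀ : GaussianInt), n = c * n₀ ∧ Odd c ∧ 2 ∣ n₀ - 1 ∧ IsCoprime n₀.re n₀.im := by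
  have hn0 := ne_zero_of_not_ωg_dvd (not_ωg_dvd_of_two_dvd_sub_one hn)
  obtain ⟨n₀, hfac, hprim⟩ := Zsqrtd.exists_coprime_of_gcd_pos ((Zsqrtd.gcd_pos_iff n).2 hn0)
  rw [Int.cast_natCast] at hfac
  refine ⟨_, n₀, hfac, ?_⟩
  rw [two_dvd_sub_one_iff, hfac] at hn
  generalize Int.gcd n.re n.im = c at hn
  simp only [Zsqrtd.re_mul, Zsqrtd.im_mul, Zsqrtd.re_natCast, Zsqrtd.im_natCast, mul_zero,
    zero_mul, add_zero, Int.odd_mul, Int.even_mul] at hn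
  obtain ⟨⟨hc, hre⟩, him⟩ := hn
  have him : Even n₀.im := him.resolve_left (Int.not_even_iff_odd.2 hc)
  exact ⟨by exact_mod_cast hc, two_dvd_sub_one_iff.2 ⟨hre, him⟩, hprim⟩

end OddGaussianIntegers

namespace IsQuadSym

open scoped NumberTheorySymbols

variable {χ : GaussianInt → GaussianInt → ℤ} {a b m n p : GaussianInt}

section PrimeDenominator

theorem trichotomy_of_prime (hχ : IsQuadSym χ) (hp : Prime p) (hodd : ¬ ωg ∣ p)
    (a : GaussianInt) : χ a p = 0 ∨ χ a p = 1 ∨ χ a p = -1 := by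
  by_cases ha : p ∣ a
  · exact .inl (hχ.zero_of_dvd p a hp ha)
  · exact .inr (hχ.val_prime p a hp hodd ha).1

theorem prime_dvd_pow_sub (hχ : IsQuadSym χ) (hp : Prime p) (hodd : ¬ ωg ∣ p) (a : GaussianInt) :
    p ∣ a ^ ((p.norm.natAbs - 1) / 2) - (χ a p : GaussianInt) := by
  by_cases ha : p ∣ a
  · have hexp : (p.norm.natAbs - 1) / 2 ≠ 0 := by
      have hunit : p.norm.natAbs ≠ 1 := Zsqrtd.norm_eq_one_iff.not.2 hp.not_isUnit
      have := norm_natAbs_mod_four_eq_one hodd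
      omega
    simpa [hχ.zero_of_dvd p a hp ha] using dvd_pow ha hexp
  · have hnorm : p.norm.natAbs = p.norm.toNat := by
      have := GaussianInt.norm_nonneg p
      omega
    rw [hnorm]
    exact (hχ.val_prime p a hp hodd ha).2

theorem eq_of_prime_dvd_pow_sub (hχ : IsQuadSym χ) (hp : Prime p) (hodd : ¬ ωg ∣ p) {e : ℤ}
    (he : e = 0 ∨ e = 1 ∨ e = -1)
    (h : p ∣ a ^ ((p.norm.natAbs - 1) / 2) - (e : GaussianInt)) : χ a p = e := by
  refine eq_of_dvd_sub_of_trichotomy (not_dvd_two_of_prime hp hodd)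
    (hχ.trichotomy_of_prime hp hodd a) he ?_
  simpa using dvd_sub h (hχ.prime_dvd_pow_sub hp hodd a)

theorem mul_num_of_prime (hχ : IsQuadSym χ) (hp : Prime p) (hodd : ¬ ωg ∣ p)
    (a b : GaussianInt) : χ (a * b) p = χ a p * χ b p := by
  refine hχ.eq_of_prime_dvd_pow_sub hp hodd ?_ ?_
  · rcases hχ.trichotomy_of_prime hp hodd a with ha | ha | ha <;>
      rcases hχ.trichotomy_of_prime hp hodd b with hb | hb | hb <;> simp [ha, hb]
  · obtain ⟨c, hc⟩ := hχ.prime_dvd_pow_sub hp hodd a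
    obtain ⟨d, hd⟩ := hχ.prime_dvd_pow_sub hp hodd b
    refine ⟨c * b ^ ((p.norm.natAbs - 1) / 2) + χ a p * d, ?_⟩
    push_cast
    linear_combination b ^ ((p.norm.natAbs - 1) / 2) * hc + (χ a p : GaussianInt) * hd

theorem congr_num_of_prime (hχ : IsQuadSym χ) (hp : Prime p) (hodd : ¬ ωg ∣ p)
    (h : p ∣ a - b) : χ a p = χ b p := by
  refine hχ.eq_of_prime_dvd_pow_sub hp hodd (hχ.trichotomy_of_prime hp hodd b) ?_
  simpa using dvd_add (h.trans (sub_dvd_pow_sub_pow a b ((p.norm.natAbs - 1) / 2)))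
    (hχ.prime_dvd_pow_sub hp hodd b)

theorem star_num_star_den_of_prime (hχ : IsQuadSym χ) (hp : Prime p) (hodd : ¬ ωg ∣ p)
    (a : GaussianInt) : χ (star a) (star p) = χ a p := by
  have hp' : Prime (star p) := (MulEquiv.prime_iff (starRingAut : GaussianInt ≃+* _)).2 hp
  refine hχ.eq_of_prime_dvd_pow_sub hp' (ωg_dvd_star_iff.not.2 hodd)
    (hχ.trichotomy_of_prime hp hodd a) ?_
  simpa [Zsqrtd.norm_conj, starRingEnd_apply] using map_dvd (starRingEnd GaussianInt)
    (hχ.prime_dvd_pow_sub hp hodd a)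

theorem intCast_num_of_prime (hχ : IsQuadSym χ) (hp : Prime p) (hodd : ¬ ωg ∣ p) (c : ℤ) :
    χ (c : GaussianInt) p = J(c | p.norm.natAbs) := by
  refine hχ.eq_of_prime_dvd_pow_sub hp hodd (jacobiSym.trichotomy c _) ?_
  obtain ⟨q, k, hq, hpq, hnorm⟩ := exists_prime_natCast_dvd_norm_eq_pow hp
  have hq_odd : Odd q := hq.odd_of_ne_two <| by
    rintro rfl
    exact not_dvd_two_of_prime hp hodd (by exact_mod_cast hpq)
  rw [hnorm]
  exact hpq.trans (prime_dvd_pow_sub_jacobiSym hq hq_odd c k)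

theorem num_natCast_of_inert (hχ : IsQuadSym χ) {q : ℕ} (hq : q.Prime)
    (hqi : Prime (q : GaussianInt)) (hodd : Odd q) (z : GaussianInt) :
    χ z (q : GaussianInt) = J(z.norm | q) := by
  refine hχ.eq_of_prime_dvd_pow_sub hqi (not_ωg_dvd_natCast hodd) (jacobiSym.trichotomy _ _) ?_
  have : Fact q.Prime := ⟨hq⟩
  have hneg : J(-1 | q) = -1 := by
    rw [jacobiSym.at_neg_one hodd, ZMod.χ₄_nat_three_mod_four
      (GaussianInt.mod_four_eq_three_of_nat_prime_of_prime q hqi)]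
  have hexp : ((q : GaussianInt).norm.natAbs - 1) / 2 = (q + 1) * ((q - 1) / 2) := by
    obtain ⟨k, rfl⟩ := hodd
    have hsq : (2 * k + 1) * (2 * k + 1) = 2 * ((2 * k + 1 + 1) * k) + 1 := by ring
    rw [Zsqrtd.norm_natCast, Int.natAbs_mul, Int.natAbs_natCast, hsq, Nat.add_sub_cancel,
      Nat.add_sub_cancel, Nat.mul_div_cancel_left _ two_pos, Nat.mul_div_cancel_left _ two_pos]
  rw [hexp, pow_mul]
  have h1 := (prime_dvd_pow_succ_sub_norm hq hodd hneg z).trans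
    (sub_dvd_pow_sub_pow _ _ ((q - 1) / 2))
  have h2 := prime_dvd_pow_sub_jacobiSym (R := GaussianInt) hq hodd z.norm 1
  rw [pow_one] at h2
  simpa using dvd_add h1 h2

end PrimeDenominator

theorem mul_num (hχ : IsQuadSym χ) (hn : ¬ ωg ∣ n) (a b : GaussianInt) :
    χ (a * b) n = χ a n * χ b n := by
  induction n, hn using odd_induction with
  | unit u _ hu => simp [hχ.unit_den _ _ hu]
  | prime_mul p c hp hpo hco _ ih =>
    simp only [hχ.mul_den _ _ _ hpo hco, hχ.mul_num_of_prime hp hpo, ih]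
    ring

theorem congr_num (hχ : IsQuadSym χ) (hn : ¬ ωg ∣ n) (h : n ∣ a - b) : χ a n = χ b n := by
  induction n, hn using odd_induction with
  | unit u _ hu => simp [hχ.unit_den _ _ hu]
  | prime_mul p c hp hpo hco _ ih =>
    rw [hχ.mul_den _ _ _ hpo hco, hχ.mul_den _ _ _ hpo hco,
      hχ.congr_num_of_prime hp hpo (dvd_of_mul_right_dvd h), ih (dvd_of_mul_left_dvd h)]

theorem isUnit_of_isCoprime (hχ : IsQuadSym χ) (hn : ¬ ωg ∣ n) (han : IsCoprime a n) :
    IsUnit (χ a n) := by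
  induction n, hn using odd_induction with
  | unit u _ hu => simp [hχ.unit_den _ _ hu]
  | prime_mul p c hp hpo hco _ ih =>
    have hpa : ¬ p ∣ a := fun h => hp.not_isUnit (han.of_mul_right_left.isUnit_of_dvd' h dvd_rfl)
    rw [hχ.mul_den _ _ _ hpo hco]
    exact (Int.isUnit_iff.2 (hχ.val_prime p a hp hpo hpa).1).mul (ih han.of_mul_right_right)

theorem star_num_star_den (hχ : IsQuadSym χ) (hn : ¬ ωg ∣ n) (a : GaussianInt) :
    χ (star a) (star n) = χ a n := by
  induction n, hn using odd_induction with
  | unit u _ hu => rw [hχ.unit_den _ _ hu, hχ.unit_den _ _ hu.star]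
  | prime_mul p c hp hpo hco _ ih =>
    rw [star_mul', hχ.mul_den _ _ _ (ωg_dvd_star_iff.not.2 hpo) (ωg_dvd_star_iff.not.2 hco),
      hχ.star_num_star_den_of_prime hp hpo, ih, hχ.mul_den _ _ _ hpo hco]

theorem intCast_num (hχ : IsQuadSym χ) (hn : ¬ ωg ∣ n) (c : ℤ) :
    χ (c : GaussianInt) n = J(c | n.norm.natAbs) := by
  induction n, hn using odd_induction with
  | unit u _ hu => rw [hχ.unit_den _ _ hu, Zsqrtd.norm_eq_one_iff.2 hu, jacobiSym.one_right]
  | prime_mul p a hp hpo hao _ ih =>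
    have norm_ne_zero {z : GaussianInt} (hz : ¬ ωg ∣ z) : z.norm.natAbs ≠ 0 :=
      Int.natAbs_ne_zero.2 (GaussianInt.norm_eq_zero.not.2 (ne_zero_of_not_ωg_dvd hz))
    rw [hχ.mul_den _ _ _ hpo hao, hχ.intCast_num_of_prime hp hpo, ih, Zsqrtd.norm_mul,
      Int.natAbs_mul, jacobiSym.mul_right' _ (norm_ne_zero hpo) (norm_ne_zero hao)]

theorem num_mul_star (hχ : IsQuadSym χ) (hn : ¬ ωg ∣ n) (z : GaussianInt) :
    χ z (n * star n) = J(z.norm | n.norm.natAbs) := by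
  have hn' := ωg_dvd_star_iff.not.2 hn
  rw [hχ.mul_den _ _ _ hn hn', ← hχ.star_num_star_den hn' z, star_star, ← hχ.mul_num hn,
    ← Zsqrtd.norm_eq_mul_conj, hχ.intCast_num hn]

theorem num_natCast_of_prime (hχ : IsQuadSym χ) {q : ℕ} (hq : q.Prime) (hodd : Odd q)
    (z : GaussianInt) : χ z (q : GaussianInt) = J(z.norm | q) := by
  by_cases hqi : Prime (q : GaussianInt)
  · exact hχ.num_natCast_of_inert hq hqi hodd z
  have : Fact q.Prime := ⟨hq⟩
  obtain ⟨x, y, hxy⟩ := GaussianInt.sq_add_sq_of_nat_prime_of_not_irreducible q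
    (irreducible_iff_prime.not.2 hqi)
  let w : GaussianInt := ⟨x, y⟩
  have hnorm : w.norm = q := by
    rw [Zsqrtd.norm_def, ← hxy]
    simp only [w]
    push_cast
    ring
  have hw : (q : GaussianInt) = w * star w := by
    rw [← Zsqrtd.norm_eq_mul_conj, hnorm, Int.cast_natCast]
  have hqo := not_ωg_dvd_natCast hodd
  rw [hw] at hqo ⊢
  rw [hχ.num_mul_star (fun h => hqo (h.mul_right _)), hnorm, Int.natAbs_natCast]

theorem num_natCast (hχ : IsQuadSym χ) {c : ℕ} (hc : Odd c) (z : GaussianInt) :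
    χ z (c : GaussianInt) = J(z.norm | c) := by
  induction c using induction_on_primes with
  | zero => exact absurd hc (by decide)
  | one => rw [Nat.cast_one, hχ.unit_den _ _ isUnit_one, jacobiSym.one_right]
  | prime_mul q a hq ih =>
    obtain ⟨hqo, hao⟩ := Nat.odd_mul.1 hc
    rw [Nat.cast_mul, hχ.mul_den _ _ _ (not_ωg_dvd_natCast hqo) (not_ωg_dvd_natCast hao),
      hχ.num_natCast_of_prime hq hqo, ih hao, jacobiSym.mul_right' _ hqo.pos.ne' hao.pos.ne']

theorem natCast_comm (hχ : IsQuadSym χ) {c : ℕ} (hc : Odd c) (hn : ¬ ωg ∣ n) :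
    χ (c : GaussianInt) n = χ n (c : GaussianInt) := by
  have h := hχ.intCast_num hn c
  rw [Int.cast_natCast] at h
  rw [h, hχ.num_natCast hc, jacobiSym_comm_of_one_mod_four (by exact_mod_cast hc)
    (norm_natAbs_mod_four_eq_one hn), Int.natAbs_natCast, GaussianInt.abs_natCast_norm]

theorem eq_jacobiSym_of_primitive (hχ : IsQuadSym χ) (hn : 2 ∣ n - 1)
    (hprim : IsCoprime n.re n.im) (z : GaussianInt) :
    χ z n = J(n.re * z.re + n.im * z.im | n.norm.natAbs) := by
  have hodd := not_ωg_dvd_of_two_dvd_sub_one hn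
  have hre : χ (n.re : GaussianInt) n = 1 := by
    rw [hχ.intCast_num hodd]
    refine jacobiSym_eq_one_of_eq_sq_add_sq (two_dvd_sub_one_iff.1 hn).1
      (norm_natAbs_mod_four_eq_one hodd) hprim ?_
    rw [GaussianInt.abs_natCast_norm, Zsqrtd.norm_def]
    ring
  have hcongr : n ∣ n.re * z - ((n.re * z.re + n.im * z.im : ℤ) : GaussianInt) :=
    ⟨⟨0, z.im⟩, by ext <;> simp⟩
  rw [← hχ.intCast_num hodd, ← hχ.congr_num hodd hcongr, hχ.mul_num hodd, hre, one_mul]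

theorem comm_of_primitive (hχ : IsQuadSym χ) (hm : 2 ∣ m - 1) (hn : 2 ∣ n - 1)
    (hm_prim : IsCoprime m.re m.im) (hn_prim : IsCoprime n.re n.im) (hmn : IsCoprime m n) :
    χ m n = χ n m := by
  have hm_odd := not_ωg_dvd_of_two_dvd_sub_one hm
  have hn_odd := not_ωg_dvd_of_two_dvd_sub_one hn
  have hm_mod := norm_natAbs_mod_four_eq_one hm_odd
  have hn_mod := norm_natAbs_mod_four_eq_one hn_odd
  set A := m.re * n.re + m.im * n.im
  set B := m.re * n.im - m.im * n.re
  set N := m.norm.natAbs * n.norm.natAbs with hN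
  have hprod : J(A | N) = χ n m * χ m n := by
    rw [hχ.eq_jacobiSym_of_primitive hm hm_prim, hχ.eq_jacobiSym_of_primitive hn hn_prim,
      mul_comm n.re, mul_comm n.im, jacobiSym.mul_right' _ (by omega) (by omega)]
  have hunit := hχ.isUnit_of_isCoprime hn_odd hmn
  have hsum : (N : ℤ) = A ^ 2 + B ^ 2 := by
    rw [hN, Nat.cast_mul, GaussianInt.abs_natCast_norm, GaussianInt.abs_natCast_norm,
      Zsqrtd.norm_def, Zsqrtd.norm_def]
    ring
  have hcop : IsCoprime A B := by
    refine isCoprime_of_jacobiSym_ne_zero (mul_ne_zero (by omega) (by omega)) hsum ?_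
    rw [hprod]
    exact ((hχ.isUnit_of_isCoprime hm_odd hmn.symm).mul hunit).ne_zero
  have hA_odd : Odd A := by
    obtain ⟨hm_re, hm_im⟩ := two_dvd_sub_one_iff.1 hm
    exact (hm_re.mul (two_dvd_sub_one_iff.1 hn).1).add_even (hm_im.mul_right _)
  have hone : χ n m * χ m n = 1 := by
    rw [← hprod]
    exact jacobiSym_eq_one_of_eq_sq_add_sq hA_odd (by rw [hN, Nat.mul_mod, hm_mod, hn_mod])
      hcop hsum
  exact mul_right_cancel₀ hunit.ne_zero ((Int.isUnit_mul_self hunit).trans hone.symm)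

theorem comm_of_isCoprime (hχ : IsQuadSym χ) (hm : 2 ∣ m - 1) (hn : 2 ∣ n - 1)
    (hmn : IsCoprime m n) : χ m n = χ n m := by
  have hm_odd := not_ωg_dvd_of_two_dvd_sub_one hm
  have hn_odd := not_ωg_dvd_of_two_dvd_sub_one hn
  obtain ⟨c, m₀, rfl, hc, hm₀, hm₀_prim⟩ := exists_natCast_mul_primitive hm
  obtain ⟨d, n₀, rfl, hd, hn₀, hn₀_prim⟩ := exists_natCast_mul_primitive hn
  have hc_odd := not_ωg_dvd_natCast hc
  have hd_odd := not_ωg_dvd_natCast hd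
  have hm₀_odd := not_ωg_dvd_of_two_dvd_sub_one hm₀
  have hn₀_odd := not_ωg_dvd_of_two_dvd_sub_one hn₀
  have hprim : χ m₀ n₀ = χ n₀ m₀ := hχ.comm_of_primitive hm₀ hn₀ hm₀_prim hn₀_prim
    hmn.of_mul_left_right.of_mul_right_right
  rw [hχ.mul_num hn_odd, hχ.natCast_comm hc hn_odd, hχ.mul_den _ _ _ hc_odd hm₀_odd,
    hχ.mul_den _ _ _ hd_odd hn₀_odd, hprim, ← hχ.natCast_comm hd hm₀_odd, ← hχ.mul_num hm₀_odd]

theorem crt_num (hχ : IsQuadSym χ) (hm : ¬ ωg ∣ m) (hn : ¬ ωg ∣ n) (x y : GaussianInt) :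
    χ (n * x + m * y) (m * n) = χ n m * χ m n * (χ x m * χ y n) := by
  rw [hχ.mul_den _ _ _ hm hn, hχ.congr_num (b := n * x) hm ⟨y, by ring⟩,
    hχ.congr_num (b := m * y) hn ⟨x, by ring⟩, hχ.mul_num hm, hχ.mul_num hn]
  ring

end IsQuadSym

theorem eT_add (z w : ℂ) : eT (z + w) = eT z * eT w := by
  simp only [eT, map_add, ← Complex.exp_add]
  ring_nf

theorem eT_crt {m n : GaussianInt} (hm : m ≠ 0) (hn : n ≠ 0) (k x y : GaussianInt) :
    eT (GaussianInt.toComplex (k * (n * x + m * y)) / GaussianInt.toComplex (m * n)) =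
      eT (GaussianInt.toComplex (k * x) / GaussianInt.toComplex m) *
        eT (GaussianInt.toComplex (k * y) / GaussianInt.toComplex n) := by
  have hm' := GaussianInt.toComplex_eq_zero.not.2 hm
  have hn' := GaussianInt.toComplex_eq_zero.not.2 hn
  rw [← eT_add]
  congr 1
  simp only [map_mul, map_add]
  field_simp

namespace IsGaussSum

variable {χ : GaussianInt → GaussianInt → ℤ} {g : GaussianInt → GaussianInt → ℂ}
  {m n s : GaussianInt}

theorem mul_left (hg : IsGaussSum χ g) (hχ : IsQuadSym χ) (hn : ¬ ωg ∣ n) (hsn : IsCoprime s n)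
    (r : GaussianInt) : g (r * s) n = (starRingEnd ℂ) (χ s n : ℂ) * g r n := by
  have hn0 := ne_zero_of_not_ωg_dvd hn
  obtain ⟨S, hS⟩ := exists_isCompleteResidueSystem_gaussianInt hn0
  have hsq : (χ s n : ℂ) * χ s n = 1 := by
    exact_mod_cast Int.isUnit_mul_self (hχ.isUnit_of_isCoprime hn hsn)
  have hr : g r n = χ s n * g (r * s) n := by
    rw [hg r n hn0 _ (hS.image_mul_left hsn), hg (r * s) n hn0 S hS,
      Finset.sum_image (hS.injOn_mul_left hsn), Finset.mul_sum]
    refine Finset.sum_congr rfl fun x _ => ?_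
    rw [hχ.mul_num hn, ← mul_assoc r s x, Int.cast_mul, mul_assoc]
  rw [hr, map_intCast, ← mul_assoc, hsq, one_mul]

theorem mul_right (hg : IsGaussSum χ g) (hχ : IsQuadSym χ) (hm : ¬ ωg ∣ m) (hn : ¬ ωg ∣ n)
    (hmn : IsCoprime m n) (k : GaussianInt) :
    g k (m * n) = χ n m * χ m n * (g k m * g k n) := by
  have hm0 := ne_zero_of_not_ωg_dvd hm
  have hn0 := ne_zero_of_not_ωg_dvd hn
  obtain ⟨S, hS⟩ := exists_isCompleteResidueSystem_gaussianInt hm0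
  obtain ⟨T, hT⟩ := exists_isCompleteResidueSystem_gaussianInt hn0
  rw [hg k (m * n) (mul_ne_zero hm0 hn0) _ (hS.image_crt hT hmn), hg k m hm0 S hS,
    hg k n hn0 T hT, Finset.sum_image (hS.injOn_crt hT hmn), Finset.sum_mul_sum,
    ← Finset.sum_product', Finset.mul_sum]
  refine Finset.sum_congr rfl fun t _ => ?_
  rw [hχ.crt_num hm hn, eT_crt hm0 hn0]
  push_cast
  ring

end IsGaussSum

theorem gauss_sum_twist_and_mult_general
    (χ : GaussianInt → GaussianInt → ℤ) (hχ : IsQuadSym χ)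
    (g : GaussianInt → GaussianInt → ℂ) (hg : IsGaussSum χ g) (n m r s k : GaussianInt) :
    (¬ ωg ∣ n → IsCoprime s n → g (r * s) n = (starRingEnd ℂ) ((χ s n : ℂ)) * g r n) ∧
      (2 ∣ n - 1 → 2 ∣ m - 1 → IsCoprime m n → g k (m * n) = g k m * g k n) := by
  refine ⟨fun hn hsn => hg.mul_left hχ hn hsn r, fun hn hm hmn => ?_⟩
  have hm_odd := not_ωg_dvd_of_two_dvd_sub_one hm
  have hn_odd := not_ωg_dvd_of_two_dvd_sub_one hn
  have hsq : (χ n m : ℂ) * χ n m = 1 := by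
    exact_mod_cast Int.isUnit_mul_self (hχ.isUnit_of_isCoprime hm_odd hmn.symm)
  rw [hg.mul_right hχ hm_odd hn_odd hmn, hχ.comm_of_isCoprime hm hn hmn, hsq, one_mul]

/-- twisting and multiplicativity of quadratic Gauss sums
(Lemma 2.1 (i) of the paper): for primary `n, m`,
(i) `g(rs, n) = conj((s/n)) g(r, n)` when `(s,n) = 1`, and
(ii) `g(k, mn) = g(k, m) g(k, n)` when `(m,n) = 1`. -/
theorem gauss_sum_twist_and_mult
    (χ : GaussianInt → GaussianInt → ℤ) (hχ : IsQuadSym χ)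
    (g : GaussianInt → GaussianInt → ℂ) (hg : IsGaussSum χ g)
    (n m r s k : GaussianInt) (hn : IsPrimary n) (hm : IsPrimary m) :
    (IsCoprime s n → g (r * s) n = (starRingEnd ℂ) ((χ s n : ℂ)) * g r n) ∧
      (IsCoprime m n → g k (m * n) = g k m * g k n) := by
  obtain ⟨twist, mult⟩ := gauss_sum_twist_and_mult_general χ hχ g hg n m r s k
  exact ⟨twist (not_ωg_dvd_of_two_dvd_sub_one hn.two_dvd_sub_one),
    mult hn.two_dvd_sub_one hm.two_dvd_sub_one⟩
end
end

section
/- Let χ be a Dirichlet character modulo n on O_K and let W : ℝ⁺ → ℝ be a smooth (rapidly decaying) function. Then for any X > 0, ∑_{m ∈ O_K} χ(m) W(N(m)/X) = (X/N(n)) ∑_{k ∈ O_K} g(k, χ) W̃(√(N(k)X/N(n))), where W̃(t) = ∫_{−∞}^{∞} ∫_{−∞}^{∞} W(N(x+yi)) ẽ(−t(x+yi)) dx dy for t ≥ 0. -/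
open Complex Real Filter Topology
open scoped BigOperators Classical

noncomputable section

/-- The transform `W̃(t) = ∫∫ W(N(x+yi)) ẽ(−t(x+yi)) dx dy`. -/
def Wt (W : ℝ → ℝ) (t : ℝ) : ℂ :=
  ∫ x : ℝ, ∫ y : ℝ, ((W (x ^ 2 + y ^ 2) : ℝ) : ℂ) * eT (-(t : ℂ) * ((x : ℂ) + (y : ℂ) * Complex.I))

section PoissonSummation

/-! Poisson summation for the lattice `L` spanned by an orthonormal basis of `V` is the Fourier
series of the periodization `∑ v ∈ L, f (x + v)` on `V ⧸ L ≃ (ℝ/ℤ)^ι`: its Fourier coefficients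
unfold to values of `𝓕 f`. A function on `ℤ[i]` that is periodic modulo `n` splits the sum into
finitely many sums over residue classes `r + n ℤ[i]`. Since `N(r + n m)/X = (N(n)/X) |r/n + m|²`,
each of them is the periodization at `r/n` of a radial Schwartz function on `ℂ`. Its Fourier
transform is again radial, so rotating the frequency onto the imaginary axis identifies it with
`W̃`; the phases `ẽ(k r/n)`, weighted by `χ(r)`, add up to the Gauss sum. -/

open MeasureTheory TopologicalSpace
open Set (range)
open Submodule (span)
open Complex (orthonormalBasisOneI)
open scoped FourierTransform SchwartzMap RealInnerProductSpace ComplexConjugate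

theorem setIntegral_tsum_vadd_eq_integral {G α E : Type*} [AddGroup G] [Countable G]
    [AddAction G α] [MeasurableSpace α] [MeasurableConstVAdd G α] [NormedAddCommGroup E]
    [NormedSpace ℝ E] {μ : Measure α} [VAddInvariantMeasure G α μ] {s : Set α}
    (hs : IsAddFundamentalDomain G s μ) {f : α → E} (hf : Integrable f μ) :
    ∫ x in s, ∑' g : G, f (g +ᵥ x) ∂μ = ∫ x, f x ∂μ := by
  have hmeas (g : G) : AEStronglyMeasurable (fun x ↦ f (g +ᵥ x)) (μ.restrict s) :=
    ((measurePreserving_vadd g μ).integrable_comp_of_integrable hf).1.restrict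
  rw [hs.integral_eq_tsum'' f hf]
  refine integral_tsum hmeas ?_
  rw [← hs.lintegral_eq_tsum'' (‖f ·‖ₑ)]
  exact hf.2.ne

theorem summable_norm_comp_addRight_restrict {V E : Type*} [NormedAddCommGroup V] [NormedSpace ℝ V]
    [FiniteDimensional ℝ V] [NormedAddCommGroup E] [NormedSpace ℝ E]
    (L : Submodule ℤ V) [DiscreteTopology L] (f : 𝓢(V, E)) (K : Compacts V) :
    Summable fun v : L ↦ ‖((f : C(V, E)).comp (ContinuousMap.addRight (v : V))).restrict K‖ := by
  set d := Module.finrank ℤ L + 1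
  obtain ⟨C, hC⟩ : ∃ C, ∀ y, (1 + ‖y‖) ^ d * ‖f y‖ ≤ C :=
    ⟨_, fun y ↦ by
      simpa using
        SchwartzMap.one_add_le_sup_seminorm_apply (𝕜 := ℝ) (m := (d, 0)) le_rfl le_rfl f y⟩
  have hC₀ : 0 ≤ C := le_trans (by positivity) (hC 0)
  obtain ⟨R, hR₀, hR⟩ := K.isCompact.isBounded.exists_pos_norm_le
  have hbound (v : L) (hv : v ≠ 0) :
      ‖((f : C(V, E)).comp (ContinuousMap.addRight (v : V))).restrict K‖ ≤
        (1 + R) ^ d * C * ‖v‖⁻¹ ^ d := by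
    refine (ContinuousMap.norm_le _ (by positivity)).2 fun x ↦ ?_
    have hxv : ‖v‖ ≤ (1 + R) * (1 + ‖(x : V) + v‖) := by
      have : ‖v‖ ≤ ‖(x : V) + v‖ + ‖(x : V)‖ := by
        simpa using norm_sub_le ((x : V) + v) x
      nlinarith [hR x x.2, norm_nonneg ((x : V) + v)]
    rw [inv_pow, ← div_eq_mul_inv, le_div_iff₀ (by positivity), mul_comm]
    calc ‖v‖ ^ d * ‖f (x + v)‖ ≤ ((1 + R) * (1 + ‖(x : V) + v‖)) ^ d * ‖f (x + v)‖ := by gcongr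
      _ = (1 + R) ^ d * ((1 + ‖(x : V) + v‖) ^ d * ‖f (x + v)‖) := by rw [mul_pow, mul_assoc]
      _ ≤ (1 + R) ^ d * C := by gcongr; exact hC _
  refine ((ZLattice.summable_norm_pow_inv L d (Nat.lt_succ_self _)).mul_left
    ((1 + R) ^ d * C)).of_norm_bounded_eventually ?_
  filter_upwards [(Set.finite_singleton (0 : L)).compl_mem_cofinite] with v hv
  rw [norm_norm]
  exact hbound v hv

theorem summable_schwartzMap_submodule {V E : Type*} [NormedAddCommGroup V] [NormedSpace ℝ V]
    [FiniteDimensional ℝ V] [NormedAddCommGroup E] [NormedSpace ℝ E] [CompleteSpace E]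
    (L : Submodule ℤ V) [DiscreteTopology L] (f : 𝓢(V, E)) (x : V) :
    Summable fun v : L ↦ f (x + v) := by
  refine (summable_norm_comp_addRight_restrict L f ⟨{x}, isCompact_singleton⟩).of_norm_bounded
    fun v ↦ ?_
  exact ContinuousMap.norm_coe_le_norm
    (((f : C(V, E)).comp (ContinuousMap.addRight (v : V))).restrict {x}) ⟨x, rfl⟩

section Torus

variable {ι V : Type*} [Fintype ι] [NormedAddCommGroup V] [InnerProductSpace ℝ V]

/-- The quotient map from `V` to `V ⧸ L ≃ (ℝ/ℤ)^ι`, where `L` is the lattice spanned by the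
orthonormal basis `b`: it reduces the coordinates in `b` modulo `1`. -/
def toUnitAddTorus (b : OrthonormalBasis ι ℝ V) (v : V) : UnitAddTorus ι :=
  fun i ↦ (b.repr v i : UnitAddCircle)

theorem isOpenQuotientMap_toUnitAddTorus (b : OrthonormalBasis ι ℝ V) :
    IsOpenQuotientMap (toUnitAddTorus b) :=
  (IsOpenQuotientMap.piMap fun _ : ι ↦ QuotientAddGroup.isOpenQuotientMap_mk).comp
    (b.repr.toHomeomorph.trans (PiLp.homeomorph 2 _)).isOpenQuotientMap

theorem toUnitAddTorus_eq_toUnitAddTorus_iff (b : OrthonormalBasis ι ℝ V) {v w : V} :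
    toUnitAddTorus b v = toUnitAddTorus b w ↔ w - v ∈ span ℤ (range b) := by
  rw [← b.coe_toBasis, b.toBasis.mem_span_iff_repr_mem ℤ, funext_iff]
  refine forall_congr' fun i ↦ ?_
  rw [toUnitAddTorus, toUnitAddTorus, QuotientAddGroup.eq, AddSubgroup.mem_zmultiples_iff]
  simp [neg_add_eq_sub]

theorem mFourier_toUnitAddTorus (b : OrthonormalBasis ι ℝ V) (k : ι → ℤ) (v : V) :
    UnitAddTorus.mFourier k (toUnitAddTorus b v) = 𝐞 ⟪v, ∑ i, k i • b i⟫ := by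
  have hinner : ⟪v, ∑ i, k i • b i⟫ = ∑ i, k i * b.repr v i := by
    simp_rw [inner_sum, ← Int.cast_smul_eq_zsmul ℝ, real_inner_smul_right, b.repr_apply_apply,
      real_inner_comm v]
  simp only [UnitAddTorus.mFourier, ContinuousMap.coe_mk, toUnitAddTorus, fourier_coe_apply,
    hinner, Real.fourierChar_apply, ← Complex.exp_sum]
  congr 1
  push_cast
  simp_rw [Finset.mul_sum, Finset.sum_mul]
  exact Finset.sum_congr rfl fun i _ ↦ by ring

theorem mFourierCoeff_eq_setIntegral [MeasurableSpace V] [BorelSpace V] [FiniteDimensional ℝ V]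
    (b : OrthonormalBasis ι ℝ V) (F : UnitAddTorus ι → ℂ) (k : ι → ℤ) :
    UnitAddTorus.mFourierCoeff F k =
      ∫ v in ZSpan.fundamentalDomain b.toBasis,
        𝐞 (-⟪v, ∑ i, k i • b i⟫) • F (toUnitAddTorus b v) := by
  let e : V ≃ᵐ (ι → ℝ) := b.measurableEquiv.trans (MeasurableEquiv.toLp 2 (ι → ℝ)).symm
  have he : MeasurePreserving e :=
    b.measurePreserving_measurableEquiv.trans (PiLp.volume_preserving_ofLp ι)
  have hpre : e ⁻¹' Set.univ.pi (fun _ ↦ Set.Ico 0 1) = ZSpan.fundamentalDomain b.toBasis := by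
    ext v
    simp [e, OrthonormalBasis.measurableEquiv]
  have hbox : {x : ι → ℝ | ∀ i, x i ∈ Set.Ioc ((0 : ι → ℝ) i) ((0 : ι → ℝ) i + 1)} =ᵐ[volume]
      Set.univ.pi (fun _ ↦ Set.Ico 0 1) := by
    simpa [Set.pi, volume_pi] using (Measure.univ_pi_Ioc_ae_eq_Icc (f := 0) (g := 1)).trans
      (Measure.univ_pi_Ico_ae_eq_Icc (f := (0 : ι → ℝ)) (g := 1)).symm
  have hchar (v : V) : UnitAddTorus.mFourier (-k) (toUnitAddTorus b v) =
      𝐞 (-⟪v, ∑ i, k i • b i⟫) := by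
    simp [mFourier_toUnitAddTorus, inner_neg_right]
  rw [UnitAddTorus.mFourierCoeff_eq_integral F k 0, setIntegral_congr_set hbox,
    ← he.setIntegral_preimage_emb e.measurableEmbedding, hpre]
  simp only [Circle.smul_def, ← hchar]
  rfl

theorem toUnitAddTorus_add_coe (b : OrthonormalBasis ι ℝ V) (x : V)
    (v : span ℤ (range b)) : toUnitAddTorus b (x + v) = toUnitAddTorus b x :=
  ((toUnitAddTorus_eq_toUnitAddTorus_iff b).2 (by simp)).symm

theorem exists_toUnitAddTorus_eq_tsum (b : OrthonormalBasis ι ℝ V) [FiniteDimensional ℝ V]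
    {f : C(V, ℂ)}
    (hf : ∀ K : Compacts V, Summable fun v : span ℤ (range b) ↦
      ‖(f.comp (ContinuousMap.addRight (v : V))).restrict K‖) :
    ∃ F : C(UnitAddTorus ι, ℂ), ∀ x, F (toUnitAddTorus b x) =
      ∑' v : span ℤ (range b), f (x + v) := by
  let P : C(V, ℂ) := ∑' v : span ℤ (range b), f.comp (ContinuousMap.addRight (v : V))
  have hP (x : V) : P x = ∑' v : span ℤ (range b), f (x + v) :=
    (ContinuousMap.tsum_apply (ContinuousMap.summable_of_locally_summable_norm hf) x).symm
  have hper (x y : V) (hxy : toUnitAddTorus b x = toUnitAddTorus b y) : P x = P y := by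
    rw [toUnitAddTorus_eq_toUnitAddTorus_iff] at hxy
    rw [hP, hP, ← (Equiv.addLeft (⟨y - x, hxy⟩ : span ℤ (range b))).tsum_eq]
    simp [← add_assoc]
  have hq := (isOpenQuotientMap_toUnitAddTorus b).isQuotientMap
  let q : C(V, UnitAddTorus ι) := ⟨toUnitAddTorus b, hq.continuous⟩
  have hq : IsQuotientMap q := hq
  exact ⟨hq.lift P hper, fun x ↦ (DFunLike.congr_fun (hq.lift_comp P hper) x).trans (hP x)⟩

theorem mFourierCoeff_eq_fourier [MeasurableSpace V] [BorelSpace V] [FiniteDimensional ℝ V]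
    (b : OrthonormalBasis ι ℝ V) {f : V → ℂ} (hf : Integrable f) {F : UnitAddTorus ι → ℂ}
    (hF : ∀ x, F (toUnitAddTorus b x) = ∑' v : span ℤ (range b), f (x + v))
    (k : ι → ℤ) : UnitAddTorus.mFourierCoeff F k = 𝓕 f (∑ i, k i • b i) := by
  have hchar (x : V) (v : span ℤ (range b)) :
      𝐞 (-⟪x, ∑ i, k i • b i⟫) = 𝐞 (-⟪x + v, ∑ i, k i • b i⟫) := by
    rw [AddChar.map_neg_eq_inv, AddChar.map_neg_eq_inv, inv_inj, ← Circle.coe_inj,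
      ← mFourier_toUnitAddTorus, ← mFourier_toUnitAddTorus, toUnitAddTorus_add_coe]
  have hfund : IsAddFundamentalDomain (span ℤ (range b)) (ZSpan.fundamentalDomain b.toBasis) := by
    rw [← b.coe_toBasis]
    exact ZSpan.isAddFundamentalDomain b.toBasis volume
  have : VAddInvariantMeasure (span ℤ (range b)) V volume :=
    inferInstanceAs (VAddInvariantMeasure (span ℤ (range b)).toAddSubgroup V volume)
  have hint : Integrable fun v ↦ 𝐞 (-⟪v, ∑ i, k i • b i⟫) • f v :=
    (Real.fourierIntegral_convergent_iff _).2 hf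
  rw [mFourierCoeff_eq_setIntegral b, Real.fourier_eq,
    ← setIntegral_tsum_vadd_eq_integral hfund hint]
  refine integral_congr_ae (ae_of_all _ fun x ↦ ?_)
  simp_rw [hF, Submodule.vadd_def, vadd_eq_add, add_comm _ x, ← hchar, tsum_const_smul']

theorem hasSum_fourierChar_smul_fourier [MeasurableSpace V] [BorelSpace V] [FiniteDimensional ℝ V]
    (b : OrthonormalBasis ι ℝ V) {f : C(V, ℂ)} (hf : Integrable f)
    (h_norm : ∀ K : Compacts V, Summable fun v : span ℤ (range b) ↦
      ‖(f.comp (ContinuousMap.addRight (v : V))).restrict K‖)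
    (h_sum : Summable fun w : span ℤ (range b) ↦ 𝓕 (f : V → ℂ) (w : V)) (x : V) :
    HasSum (fun w : span ℤ (range b) ↦ 𝐞 ⟪x, (w : V)⟫ • 𝓕 (f : V → ℂ) (w : V))
      (∑' v : span ℤ (range b), f (x + v)) := by
  obtain ⟨F, hF⟩ := exists_toUnitAddTorus_eq_tsum b h_norm
  let e : (ι → ℤ) ≃ span ℤ (range b) := ((b.toBasis.restrictScalars ℤ).equivFun.symm.trans
    (LinearEquiv.ofEq _ _ (by rw [b.coe_toBasis]))).toEquiv
  have he (k : ι → ℤ) : (e k : V) = ∑ i, k i • b i := by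
    simp only [e, LinearEquiv.coe_toEquiv, LinearEquiv.trans_apply, LinearEquiv.coe_ofEq_apply,
      Module.Basis.equivFun_symm_apply, Submodule.coe_sum, Submodule.coe_smul,
      Module.Basis.restrictScalars_apply]
    rw [b.coe_toBasis]
  have hcoeff (k : ι → ℤ) : UnitAddTorus.mFourierCoeff F k = 𝓕 (f : V → ℂ) (e k : V) := by
    rw [he, mFourierCoeff_eq_fourier b hf hF]
  have hsum : Summable (UnitAddTorus.mFourierCoeff F) := by
    simpa only [funext hcoeff] using! e.summable_iff.2 h_sum
  rw [← hF, ← e.hasSum_iff]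
  convert! UnitAddTorus.hasSum_mFourier_series_apply_of_summable hsum (toUnitAddTorus b x) using 2
    with k
  rw [hcoeff, mFourier_toUnitAddTorus, ← he, Function.comp_apply, Circle.smul_def, smul_eq_mul,
    smul_eq_mul, mul_comm]

theorem discreteTopology_span_range_orthonormalBasis
    (b : OrthonormalBasis ι ℝ V) : DiscreteTopology (span ℤ (range b)) := by
  rw [← b.coe_toBasis]
  infer_instance

theorem hasSum_fourierChar_smul_fourier_schwartzMap [MeasurableSpace V] [BorelSpace V]
    [FiniteDimensional ℝ V] (b : OrthonormalBasis ι ℝ V) (f : 𝓢(V, ℂ)) (x : V) :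
    HasSum (fun w : span ℤ (range b) ↦ 𝐞 ⟪x, (w : V)⟫ • 𝓕 (f : V → ℂ) (w : V))
      (∑' v : span ℤ (range b), f (x + v)) := by
  have := discreteTopology_span_range_orthonormalBasis b
  refine hasSum_fourierChar_smul_fourier b (f := (f : C(V, ℂ))) f.integrable
    (summable_norm_comp_addRight_restrict _ f) ?_ x
  simpa [SchwartzMap.fourier_coe] using summable_schwartzMap_submodule (span ℤ (range b)) (𝓕 f) 0

end Torus

section Radial

variable {V : Type*} [NormedAddCommGroup V] [InnerProductSpace ℝ V]

theorem fourier_eq_of_norm_eq [MeasurableSpace V] [BorelSpace V] [FiniteDimensional ℝ V]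
    {E : Type*} [NormedAddCommGroup E] [NormedSpace ℂ E] {f : V → E}
    (hf : ∀ v w, ‖v‖ = ‖w‖ → f v = f w) {v w : V} (h : ‖v‖ = ‖w‖) : 𝓕 f v = 𝓕 f w := by
  let A : V ≃ₗᵢ[ℝ] V := (ℝ ∙ (v - w))ᗮ.reflection
  have hA : f ∘ A = f := funext fun u ↦ hf _ _ (A.norm_map u)
  calc 𝓕 f v = 𝓕 (f ∘ A) v := by rw [hA]
    _ = 𝓕 f (A v) := Real.fourier_comp_linearIsometry A f v
    _ = 𝓕 f w := by rw [Submodule.reflection_sub h]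

theorem fourier_comp_smul [MeasurableSpace V] [BorelSpace V] [FiniteDimensional ℝ V]
    {E : Type*} [NormedAddCommGroup E] [NormedSpace ℂ E] (f : V → E) {c : ℝ} (hc : c ≠ 0) (w : V) :
    𝓕 (fun v ↦ f (c • v)) w = |(c ^ Module.finrank ℝ V)⁻¹| • 𝓕 f (c⁻¹ • w) := by
  simp only [Real.fourier_eq]
  rw [← Measure.integral_comp_smul]
  simp [real_inner_smul_left, real_inner_smul_right, hc]

/-- The radial Schwartz function `v ↦ W (a‖v‖²)`; for `a = N(n)/X` on `ℂ` it is the summand in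
the sum over a residue class modulo `n`. -/
def radialSchwartz (W : 𝓢(ℝ, ℝ)) {a : ℝ} (ha : 0 < a) : 𝓢(V, ℂ) :=
  SchwartzMap.postcompCLM (𝕜 := ℝ) Complex.ofRealCLM
    (SchwartzMap.compCLM ℝ (g := fun v : V ↦ a * ‖v‖ ^ 2) (by fun_prop)
      ⟨1, 1 + a⁻¹, fun v ↦ by
        have h : ‖v‖ ^ 2 = a⁻¹ * (a * ‖v‖ ^ 2) := by field_simp
        rw [Real.norm_of_nonneg (by positivity), pow_one]
        have : 0 ≤ a⁻¹ := by positivity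
        nlinarith [sq_nonneg (‖v‖ - 1), mul_nonneg ha.le (sq_nonneg ‖v‖)]⟩ W)

@[simp]
theorem radialSchwartz_apply (W : 𝓢(ℝ, ℝ)) {a : ℝ} (ha : 0 < a) (v : V) :
    radialSchwartz W ha v = (W (a * ‖v‖ ^ 2) : ℂ) := rfl

end Radial

theorem eT_eq_fourierChar (z : ℂ) : eT z = 𝐞 z.im := by
  rw [eT, Real.fourierChar_apply, ← sub_div, Complex.sub_conj]
  congr 1
  push_cast
  field_simp

theorem integral_complex_eq_integral_integral {E : Type*} [NormedAddCommGroup E]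
    [NormedSpace ℝ E] {f : ℂ → E} (hf : Integrable f) :
    ∫ z, f z = ∫ x : ℝ, ∫ y : ℝ, f (x + y * Complex.I) := by
  have h := Complex.volume_preserving_equiv_real_prod.symm
  rw [← h.integral_comp' f]
  refine (integral_prod _ (h.integrable_comp_of_integrable hf)).trans ?_
  simp [Complex.measurableEquivRealProd_symm_apply, Complex.mk_eq_add_mul_I]

theorem fourier_comp_norm_sq {h : ℝ → ℝ} (hh : Integrable fun z : ℂ ↦ (h (‖z‖ ^ 2) : ℂ)) (w : ℂ) :
    𝓕 (fun z : ℂ ↦ (h (‖z‖ ^ 2) : ℂ)) w = Wt h ‖w‖ := by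
  have hw : ‖w‖ = ‖(‖w‖ : ℂ) * Complex.I‖ := by simp
  rw [fourier_eq_of_norm_eq (fun v w hvw ↦ by rw [hvw]) hw, Real.fourier_eq,
    integral_complex_eq_integral_integral ((Real.fourierIntegral_convergent_iff _).2 hh), Wt]
  congr! 4 with x y
  rw [Circle.smul_def, smul_eq_mul, mul_comm, eT_eq_fourierChar]
  congr! 3
  · rw [Complex.sq_norm, Complex.normSq_add_mul_I]
  · simp [Complex.inner]

theorem fourier_radialSchwartz (W : 𝓢(ℝ, ℝ)) {a : ℝ} (ha : 0 < a) (w : ℂ) :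
    𝓕 (radialSchwartz W ha : ℂ → ℂ) w = a⁻¹ * Wt W √(‖w‖ ^ 2 / a) := by
  have hdil : (radialSchwartz W ha : ℂ → ℂ) = fun z ↦ (W (‖√a • z‖ ^ 2) : ℂ) := by
    ext z
    rw [radialSchwartz_apply, norm_smul, mul_pow, Real.norm_of_nonneg (by positivity),
      Real.sq_sqrt ha.le]
  have hint : Integrable fun z : ℂ ↦ (W (‖z‖ ^ 2) : ℂ) := by
    simpa only [funext (radialSchwartz_apply W one_pos), one_mul] using
      (radialSchwartz (V := ℂ) W one_pos).integrable (μ := volume)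
  have hnorm : ‖(√a)⁻¹ • w‖ = √(‖w‖ ^ 2 / a) := by
    rw [norm_smul, Real.sqrt_div (by positivity), Real.sqrt_sq (norm_nonneg w),
      Real.norm_of_nonneg (by positivity), inv_mul_eq_div]
  rw [hdil, fourier_comp_smul (fun z : ℂ ↦ (W (‖z‖ ^ 2) : ℂ)) (Real.sqrt_pos.2 ha).ne',
    fourier_comp_norm_sq hint, Complex.finrank_real_complex, Real.sq_sqrt ha.le,
    abs_of_pos (inv_pos.2 ha), Complex.real_smul, hnorm]

theorem Nm_eq_norm_sq (n : GaussianInt) : Nm n = ‖n.toComplex‖ ^ 2 := by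
  rw [Nm, Complex.sq_norm, GaussianInt.intCast_real_norm]

theorem mem_span_orthonormalBasisOneI_iff {z : ℂ} :
    z ∈ span ℤ (range orthonormalBasisOneI) ↔ ∃ k : GaussianInt, k.toComplex = z := by
  rw [Submodule.mem_span_range_iff_exists_fun]
  constructor
  · rintro ⟨c, rfl⟩
    exact ⟨⟨c 0, c 1⟩, by simp [GaussianInt.toComplex_def₂, Complex.mk_eq_add_mul_I]⟩
  · rintro ⟨k, rfl⟩
    exact ⟨![k.re, k.im], by simp [GaussianInt.toComplex_def]⟩

/-- The embedding of `ℤ[i]` in `ℂ`, as a bijection onto the lattice spanned by the orthonormal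
basis `1, i`. -/
def gaussianIntEquivSpan : GaussianInt ≃ span ℤ (range orthonormalBasisOneI) :=
  Equiv.ofBijective (fun k ↦ ⟨k.toComplex, mem_span_orthonormalBasisOneI_iff.2 ⟨k, rfl⟩⟩)
    ⟨fun _ _ h ↦ GaussianInt.toComplex_injective (congrArg Subtype.val h),
      fun z ↦ (mem_span_orthonormalBasisOneI_iff.1 z.2).imp fun _ hk ↦ Subtype.ext hk⟩

@[simp]
theorem coe_gaussianIntEquivSpan (k : GaussianInt) : (gaussianIntEquivSpan k : ℂ) = k.toComplex :=
  rfl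

theorem toComplex_ig_mul_star (k : GaussianInt) :
    (ig * star k).toComplex = Complex.I * conj k.toComplex := by
  rw [map_mul, GaussianInt.toComplex_star, GaussianInt.toComplex_def ig]
  simp [ig]

theorem involutive_ig_mul_star : Function.Involutive fun k : GaussianInt ↦ ig * star k :=
  fun k ↦ by ext <;> simp [ig]

-- Reindexing the dual lattice by `k ↦ i * conj k` turns `⟪x, k⟫` into `Im (k * x)`, the phase of
-- `ẽ (k * x)`.
theorem hasSum_eT_mul_fourier (f : 𝓢(ℂ, ℂ)) (x : ℂ) :
    HasSum (fun k : GaussianInt ↦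
        eT (k.toComplex * x) * 𝓕 (f : ℂ → ℂ) (Complex.I * conj k.toComplex))
      (∑' m : GaussianInt, f (x + m.toComplex)) := by
  have h := hasSum_fourierChar_smul_fourier_schwartzMap orthonormalBasisOneI f x
  rw [← (involutive_ig_mul_star.toPerm.trans gaussianIntEquivSpan).hasSum_iff,
    ← gaussianIntEquivSpan.tsum_eq] at h
  have hchar (z : ℂ) : ⟪x, Complex.I * conj z⟫ = (z * x).im := by
    simp [Complex.inner, add_comm, mul_comm]
  simpa only [Function.comp_def, Equiv.trans_apply, Function.Involutive.coe_toPerm,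
    coe_gaussianIntEquivSpan, toComplex_ig_mul_star, Circle.smul_def, smul_eq_mul, hchar,
    ← eT_eq_fourierChar] using h

theorem summable_schwartzMap_toComplex (f : 𝓢(ℂ, ℂ)) :
    Summable fun m : GaussianInt ↦ f m.toComplex := by
  have := discreteTopology_span_range_orthonormalBasis orthonormalBasisOneI
  simpa [Function.comp_def] using
    gaussianIntEquivSpan.summable_iff.2 (summable_schwartzMap_submodule _ f 0)

theorem summable_schwartzMap_Nm_div (W : 𝓢(ℝ, ℝ)) {X : ℝ} (hX : 0 < X) :
    Summable fun m : GaussianInt ↦ (W (Nm m / X) : ℂ) := by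
  simpa [Nm_eq_norm_sq, div_eq_inv_mul] using
    summable_schwartzMap_toComplex (radialSchwartz W (inv_pos.2 hX))

theorem hasSum_eT_mul_Wt (W : 𝓢(ℝ, ℝ)) {n : GaussianInt} (hn : n ≠ 0) (r : GaussianInt) {X : ℝ}
    (hX : 0 < X) :
    HasSum (fun k : GaussianInt ↦ eT ((k * r).toComplex / n.toComplex) *
        ((X / Nm n : ℝ) * Wt W √(Nm k * X / Nm n)))
      (∑' m : GaussianInt, (W (Nm (r + n * m) / X) : ℂ)) := by
  have hn₀ : n.toComplex ≠ 0 := by simpa using hn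
  have ha : 0 < Nm n / X := by
    rw [Nm_eq_norm_sq]
    positivity
  have hnorm (m : GaussianInt) :
      Nm n / X * ‖r.toComplex / n.toComplex + m.toComplex‖ ^ 2 = Nm (r + n * m) / X := by
    rw [Nm_eq_norm_sq, Nm_eq_norm_sq, div_mul_eq_mul_div, ← mul_pow, ← norm_mul, mul_add,
      mul_div_cancel₀ _ hn₀, map_add, map_mul]
  convert! hasSum_eT_mul_fourier (radialSchwartz W ha) (r.toComplex / n.toComplex) using 2
  · simp only [fourier_radialSchwartz, norm_mul, Complex.norm_I, one_mul, RCLike.norm_conj,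
      ← Nm_eq_norm_sq, inv_div, div_div_eq_mul_div, map_mul, mul_div_assoc]
  · simp only [radialSchwartz_apply, hnorm]

section Residues

variable {R : Type*} [CommRing R] {n : R}

theorem exists_finset_residues [Finite (R ⧸ Ideal.span {n})] :
    ∃ S : Finset R, ∀ z, ∃! x, x ∈ S ∧ n ∣ z - x := by
  have hmk {z x : R} : n ∣ z - x ↔
      Ideal.Quotient.mk (Ideal.span {n}) z = Ideal.Quotient.mk _ x := by
    rw [Ideal.Quotient.eq, Ideal.mem_span_singleton]
  have hout (q : R ⧸ Ideal.span {n}) : Ideal.Quotient.mk _ q.out = q := Quotient.out_eq q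
  refine ⟨(Set.finite_range (Quotient.out : R ⧸ Ideal.span {n} → R)).toFinset, fun z ↦
    ⟨(Ideal.Quotient.mk (Ideal.span {n}) z).out, ⟨by simp, hmk.2 (hout _).symm⟩, ?_⟩⟩
  rintro y ⟨hy, hd⟩
  obtain ⟨q, rfl⟩ := (Set.Finite.mem_toFinset _).1 hy
  rw [hmk.1 hd, hout]

variable {S : Finset R}

theorem exists_norm_le_of_periodic {E : Type*} [SeminormedAddCommGroup E]
    (hS : ∀ z, ∃ x ∈ S, n ∣ z - x) {φ : R → E} (hφ : ∀ a b, n ∣ a - b → φ a = φ b) :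
    ∃ C, ∀ m, ‖φ m‖ ≤ C := by
  refine ⟨∑ r ∈ S, ‖φ r‖, fun m ↦ ?_⟩
  obtain ⟨r, hr, hmr⟩ := hS m
  rw [hφ m r hmr]
  exact Finset.single_le_sum (f := fun r ↦ ‖φ r‖) (fun _ _ ↦ norm_nonneg _) hr

theorem bijective_residue_add_mul [IsDomain R] (hn : n ≠ 0)
    (hS : ∀ z, ∃! x, x ∈ S ∧ n ∣ z - x) :
    Function.Bijective fun p : S × R ↦ (p.1 : R) + n * p.2 := by
  constructor
  · rintro ⟨⟨a, ha⟩, k⟩ ⟨⟨b, hb⟩, l⟩ (hab : a + n * k = b + n * l)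
    obtain rfl : a = b := (hS (a + n * k)).unique ⟨ha, by simp⟩ ⟨hb, by simp [hab]⟩
    rw [mul_left_cancel₀ hn (add_left_cancel hab)]
  · intro z
    obtain ⟨x, ⟨hx, k, hk⟩, -⟩ := hS z
    exact ⟨(⟨x, hx⟩, k), by simp [← hk]⟩

theorem tsum_eq_sum_residues [IsDomain R] {E : Type*} [NormedAddCommGroup E] [CompleteSpace E]
    (hn : n ≠ 0) (hS : ∀ z, ∃! x, x ∈ S ∧ n ∣ z - x) {h : R → E} (hh : Summable h) :
    ∑' m, h m = ∑ r ∈ S, ∑' k, h (r + n * k) := by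
  let e := Equiv.ofBijective _ (bijective_residue_add_mul hn hS)
  calc ∑' m, h m = ∑' p : S × R, h (e p) := (e.tsum_eq h).symm
    _ = ∑' r : S, ∑' k, h (r + n * k) := (e.summable_iff.2 hh).tsum_prod
    _ = ∑ r ∈ S, ∑' k, h (r + n * k) := S.tsum_subtype fun r ↦ ∑' k, h (r + n * k)

end Residues

theorem finite_quotient_span_singleton_zsqrtd {d : ℤ} [IsDomain (ℤ√d)] {n : ℤ√d} (hn : n ≠ 0) :
    Finite (ℤ√d ⧸ Ideal.span {n}) := by
  have : Module.Finite ℤ (ℤ√d) := .of_surjective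
    ((LinearMap.toSpanSingleton ℤ (ℤ√d) 1).coprod (LinearMap.toSpanSingleton ℤ _ Zsqrtd.sqrtd))
    fun z ↦ ⟨(z.re, z.im), by ext <;> simp⟩
  exact Ring.HasFiniteQuotients.finiteQuotient (by simpa using hn)

theorem poisson_summation_GaussianInt_general {n : GaussianInt} (hn : n ≠ 0) {φ : GaussianInt → ℂ}
    (hφ : ∀ a b, n ∣ a - b → φ a = φ b) {g : GaussianInt → ℂ} (hg : IsGaussSumChar n φ g)
    (W : 𝓢(ℝ, ℝ)) {X : ℝ} (hX : 0 < X) :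
    ∑' m : GaussianInt, φ m * W (Nm m / X) =
      (X / Nm n : ℝ) * ∑' k : GaussianInt, g k * Wt W √(Nm k * X / Nm n) := by
  have := finite_quotient_span_singleton_zsqrtd hn
  obtain ⟨S, hS⟩ := exists_finset_residues (n := n)
  obtain ⟨C, hC⟩ := exists_norm_le_of_periodic (fun z ↦ (hS z).exists) hφ
  have hsum : Summable fun m : GaussianInt ↦ φ m * W (Nm m / X) :=
    (summable_schwartzMap_Nm_div W hX).norm.mul_left C |>.of_norm_bounded fun m ↦ by
      rw [norm_mul]; gcongr; exact hC m
  have hpoisson (r : GaussianInt) := (hasSum_eT_mul_Wt W hn r hX).mul_left (φ r)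
  calc ∑' m : GaussianInt, φ m * W (Nm m / X)
    _ = ∑ r ∈ S, ∑' m : GaussianInt, φ (r + n * m) * W (Nm (r + n * m) / X) :=
      tsum_eq_sum_residues hn hS hsum
    _ = ∑ r ∈ S, φ r * ∑' m : GaussianInt, (W (Nm (r + n * m) / X) : ℂ) := by
      simp_rw [hφ (_ + n * _) _ ⟨_, add_sub_cancel_left _ _⟩, tsum_mul_left]
    _ = ∑' k : GaussianInt, ∑ r ∈ S, φ r * (eT ((k * r).toComplex / n.toComplex) *
          ((X / Nm n : ℝ) * Wt W √(Nm k * X / Nm n))) :=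
      (hasSum_sum fun r _ ↦ hpoisson r).tsum_eq.symm
    _ = (X / Nm n : ℝ) * ∑' k : GaussianInt, g k * Wt W √(Nm k * X / Nm n) := by
      simp_rw [← tsum_mul_left, hg _ S hS, Finset.sum_mul, Finset.mul_sum]
      exact tsum_congr fun k ↦ Finset.sum_congr rfl fun r _ ↦ by ring

end PoissonSummation

/-- the Poisson summation formula for smoothed character sums over `ℤ[i]`
(Lemma 2.2 of the paper). -/
theorem poisson_summation_GaussianInt
    (n : GaussianInt) (hn : n ≠ 0) (χ : GaussianInt → ℂ) (hχ : IsDirichletChar n χ)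
    (g : GaussianInt → ℂ) (hg : IsGaussSumChar n χ g)
    (W : SchwartzMap ℝ ℝ) (X : ℝ) (hX : 0 < X) :
    ∑' m : GaussianInt, χ m * ((W (Nm m / X) : ℝ) : ℂ) =
      ((X / Nm n : ℝ) : ℂ) *
        ∑' k : GaussianInt, g k * Wt (fun t => W t) (Real.sqrt (Nm k * X / Nm n)) := by
  exact poisson_summation_GaussianInt_general hn hχ.2.2.1 hg W hX
end
end
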